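/- arXiv:1712.08255 — 3 statements merged into one kernel-verified Lean document; each statement's English description precedes it below -/
import Mathlib

section
/- Let p ∈ (1,∞), p ≠ 2. Then: (i) for every ε > 0 and every C ≥ 1, every locally finite metric space all of whose finite subsets admit C-bilipschitz embeddings into ℓ_p admits a ((1+ε)·C)-bilipschitz embedding into ℓ_p; and (ii) there exists a locally finite metric space M whose finite subsets all admit isometric embeddings into ℓ_p but which admits no isometric embedding into ℓ_p. -/
/-!
The positive part glues embeddings of large balls around a base point, normalized so as not to
contract distances. They are combined into one map to `ℓ_p(ℤ, ℓ_p) ≅ ℓ_p`, with the coordinates of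
a unit vector of `ℓ_p(ℤ)` as coefficients. This unit vector is supported near `δ log (1 + r)`, where
`r` is the distance to the base point, and varies so slowly with `r` that the distortion grows only
by a factor `1 + O(δ)`.

The counterexample consists of the multiples `2 ^ n` of the indicator functions of `(0, j / 2 ^ n]`
in `L_p(ℝ)`. Finitely many of them are simple functions on a common finite partition, so they embed
isometrically into `ℓ_p`. Suppose that an isometry `f` embeds all of them and maps `0` to `0`, and
let `u` be the image of the indicator function of `(0, 1]`. By strict convexity `f` commutes with
doubling, so `2 ^ n` times this indicator function is mapped to `2 ^ n u`. Equality in Clarkson's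
inequality for `p ≠ 2` characterizes disjointly supported pairs; hence, for fixed `n`, every
coordinate of the image is either `0` or already equal to its final value `2 ^ n u i` at each `j`
up to `2 ^ n`. It jumps in one step of norm `2 ^ n * (2 ^ (-n)) ^ (1 / p)`, which for large `n` is
impossible unless `u i = 0`. So `u = 0`, although `‖u‖ = 1`.
-/

open scoped ENNReal

/-- A metric space is locally finite if every closed ball of finite radius is finite. -/
def MetricLocallyFinite (A : Type*) [MetricSpace A] : Prop :=
  ∀ (x : A) (R : ℝ), (Metric.closedBall x R).Finite

/-- `f` is a `C`-bilipschitz embedding: there is `r > 0` with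
`r * d(u,v) ≤ d(f u, f v) ≤ r * C * d(u,v)` for all `u, v`. -/
def IsBilipschitzEmbedding {A Y : Type*} [MetricSpace A] [MetricSpace Y]
    (C : ℝ) (f : A → Y) : Prop :=
  ∃ r : ℝ, 0 < r ∧ ∀ u v : A,
    r * dist u v ≤ dist (f u) (f v) ∧ dist (f u) (f v) ≤ r * C * dist u v

section PowersOfNorms

theorem rpow_add_rpow_lt_add_rpow {x y r : ℝ} (hx : 0 < x) (hy : 0 < y) (hr : 1 < r) :
    x ^ r + y ^ r < (x + y) ^ r := by
  have rpow_eq {z : ℝ} (hz : 0 < z) : z ^ r = z * z ^ (r - 1) := by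
    rw [Real.rpow_sub_one hz.ne', mul_div_cancel₀ _ hz.ne']
  have hr' : 0 < r - 1 := sub_pos.2 hr
  rw [rpow_eq hx, rpow_eq hy, rpow_eq (add_pos hx hy), add_mul]
  exact add_lt_add
    (mul_lt_mul_of_pos_left (Real.rpow_lt_rpow hx.le (by linarith) hr') hx)
    (mul_lt_mul_of_pos_left (Real.rpow_lt_rpow hy.le (by linarith) hr') hy)

theorem add_rpow_lt_rpow_add_rpow {x y r : ℝ} (hx : 0 < x) (hy : 0 < y) (hr : r < 1) :
    (x + y) ^ r < x ^ r + y ^ r := by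
  have rpow_eq {z : ℝ} (hz : 0 < z) : z ^ r = z * z ^ (r - 1) := by
    rw [Real.rpow_sub_one hz.ne', mul_div_cancel₀ _ hz.ne']
  have hr' : r - 1 < 0 := sub_neg.2 hr
  rw [rpow_eq hx, rpow_eq hy, rpow_eq (add_pos hx hy), add_mul]
  exact add_lt_add
    (mul_lt_mul_of_pos_left (Real.rpow_lt_rpow_of_neg hx (by linarith) hr') hx)
    (mul_lt_mul_of_pos_left (Real.rpow_lt_rpow_of_neg hy (by linarith) hr') hy)

theorem norm_rpow_eq_sq_norm_rpow_half {E : Type*} [SeminormedAddCommGroup E] (x : E) (q : ℝ) :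
    ‖x‖ ^ q = (‖x‖ ^ 2) ^ (q / 2) := by
  rw [← Real.rpow_natCast, ← Real.rpow_mul (norm_nonneg x), Nat.cast_ofNat,
    mul_div_cancel₀ q two_ne_zero]

section InnerProductSpace

variable {E : Type*} [NormedAddCommGroup E] [InnerProductSpace ℝ E] {x y : E} {q : ℝ}

theorem half_sq_norm_add_add_half_sq_norm_sub (x y : E) :
    (1 / 2 : ℝ) * ‖x + y‖ ^ 2 + (1 / 2 : ℝ) * ‖x - y‖ ^ 2 = ‖x‖ ^ 2 + ‖y‖ ^ 2 := by
  linarith [parallelogram_law_with_norm ℝ x y]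

theorem two_mul_rpow_add_rpow_lt_norm_add_sub (hq : 2 < q) (hx : x ≠ 0) (hy : y ≠ 0) :
    2 * (‖x‖ ^ q + ‖y‖ ^ q) < ‖x + y‖ ^ q + ‖x - y‖ ^ q := by
  have convexity := (convexOn_rpow (by linarith : 1 ≤ q / 2)).2
    (sq_nonneg ‖x + y‖) (sq_nonneg ‖x - y‖) one_half_pos.le one_half_pos.le (add_halves 1)
  have superadditivity := rpow_add_rpow_lt_add_rpow
    (pow_pos (norm_pos_iff.2 hx) 2) (pow_pos (norm_pos_iff.2 hy) 2) (by linarith : 1 < q / 2)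
  simp only [smul_eq_mul, half_sq_norm_add_add_half_sq_norm_sub,
    ← norm_rpow_eq_sq_norm_rpow_half] at convexity superadditivity
  linarith

theorem norm_add_sub_lt_two_mul_rpow_add_rpow (hq₀ : 0 ≤ q) (hq : q < 2)
    (hx : x ≠ 0) (hy : y ≠ 0) :
    ‖x + y‖ ^ q + ‖x - y‖ ^ q < 2 * (‖x‖ ^ q + ‖y‖ ^ q) := by
  have concavity := (Real.concaveOn_rpow (by linarith : 0 ≤ q / 2) (by linarith)).2
    (sq_nonneg ‖x + y‖) (sq_nonneg ‖x - y‖) one_half_pos.le one_half_pos.le (add_halves 1)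
  have subadditivity := add_rpow_lt_rpow_add_rpow
    (pow_pos (norm_pos_iff.2 hx) 2) (pow_pos (norm_pos_iff.2 hy) 2) (by linarith : q / 2 < 1)
  simp only [smul_eq_mul, half_sq_norm_add_add_half_sq_norm_sub,
    ← norm_rpow_eq_sq_norm_rpow_half] at concavity subadditivity
  linarith

end InnerProductSpace

theorem norm_add_rpow_add_norm_sub_rpow_of_eq_zero {E : Type*} [SeminormedAddCommGroup E]
    {x y : E} {q : ℝ} (hq : q ≠ 0) (h : x = 0 ∨ y = 0) :
    ‖x + y‖ ^ q + ‖x - y‖ ^ q = 2 * (‖x‖ ^ q + ‖y‖ ^ q) := by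
  rcases h with rfl | rfl <;> simp [Real.zero_rpow hq, two_mul]

theorem strictConvexOn_norm_rpow {E : Type*} [NormedAddCommGroup E] [NormedSpace ℝ E]
    [StrictConvexSpace ℝ E] {q : ℝ} (hq : 1 < q) :
    StrictConvexOn ℝ Set.univ fun x : E => ‖x‖ ^ q := by
  refine ⟨convex_univ, fun x _ y _ hxy a b ha hb hab => ?_⟩
  have hq₀ : 0 < q := one_pos.trans hq
  by_cases hnorm : ‖x‖ = ‖y‖
  · calc ‖a • x + b • y‖ ^ q < ‖y‖ ^ q :=
          Real.rpow_lt_rpow (norm_nonneg _)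
            (norm_combo_lt_of_ne hnorm.le le_rfl hxy ha hb hab) hq₀
      _ = a • ‖x‖ ^ q + b • ‖y‖ ^ q := by rw [hnorm, Convex.combo_self hab]
  · calc ‖a • x + b • y‖ ^ q ≤ (a • ‖x‖ + b • ‖y‖) ^ q := by
          gcongr
          simpa only [norm_smul, Real.norm_of_nonneg ha.le, Real.norm_of_nonneg hb.le, smul_eq_mul]
            using norm_add_le (a • x) (b • y)
      _ < a • ‖x‖ ^ q + b • ‖y‖ ^ q :=
          (strictConvexOn_rpow hq).2 (norm_nonneg x) (norm_nonneg y) hnorm ha hb hab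

end PowersOfNorms

section LpSpace

variable {ι : Type*} {E : ι → Type*} [∀ i, NormedAddCommGroup (E i)] {p : ℝ≥0∞}

theorem eq_zero_or_eq_zero_of_norm_add_rpow_add_norm_sub_rpow [∀ i, InnerProductSpace ℝ (E i)]
    (hp₀ : 0 < p.toReal) (hp₂ : p.toReal ≠ 2) {x y : lp E p}
    (h : ‖x + y‖ ^ p.toReal + ‖x - y‖ ^ p.toReal
      = 2 * (‖x‖ ^ p.toReal + ‖y‖ ^ p.toReal)) (i : ι) :
    x i = 0 ∨ y i = 0 := by
  have sum_left := (lp.hasSum_norm hp₀ (x + y)).add (lp.hasSum_norm hp₀ (x - y))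
  have sum_right := ((lp.hasSum_norm hp₀ x).add (lp.hasSum_norm hp₀ y)).mul_left 2
  by_contra! hi
  rcases hp₂.lt_or_gt with hp₂ | hp₂
  · refine h.not_lt (hasSum_lt (fun j => ?_)
      (norm_add_sub_lt_two_mul_rpow_add_rpow hp₀.le hp₂ hi.1 hi.2) sum_left sum_right)
    by_cases hj : x j = 0 ∨ y j = 0
    · exact (norm_add_rpow_add_norm_sub_rpow_of_eq_zero hp₀.ne' hj).le
    · rw [not_or] at hj
      exact (norm_add_sub_lt_two_mul_rpow_add_rpow hp₀.le hp₂ hj.1 hj.2).le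
  · refine h.not_gt (hasSum_lt (fun j => ?_)
      (two_mul_rpow_add_rpow_lt_norm_add_sub hp₂ hi.1 hi.2) sum_right sum_left)
    by_cases hj : x j = 0 ∨ y j = 0
    · exact (norm_add_rpow_add_norm_sub_rpow_of_eq_zero hp₀.ne' hj).ge
    · rw [not_or] at hj
      exact (two_mul_rpow_add_rpow_lt_norm_add_sub hp₂ hj.1 hj.2).le

theorem strictConvexSpace_lp [Fact (1 ≤ p)] [∀ i, NormedSpace ℝ (E i)]
    [∀ i, StrictConvexSpace ℝ (E i)] (hp : 1 < p.toReal) : StrictConvexSpace ℝ (lp E p) := by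
  have hp₀ : 0 < p.toReal := one_pos.trans hp
  refine StrictConvexSpace.of_norm_add_ne_two fun x y hx hy hxy hadd => ?_
  obtain ⟨i, hi⟩ : ∃ i, x i ≠ y i := by
    by_contra! h
    exact hxy (lp.ext (funext h))
  have hmid : ‖(1 / 2 : ℝ) • x + (1 / 2 : ℝ) • y‖ = 1 := by
    rw [← smul_add, norm_smul, hadd]
    norm_num
  have convexity (j : ι) : ‖((1 / 2 : ℝ) • x + (1 / 2 : ℝ) • y) j‖ ^ p.toReal
      ≤ 1 / 2 * ‖x j‖ ^ p.toReal + 1 / 2 * ‖y j‖ ^ p.toReal :=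
    (strictConvexOn_norm_rpow hp).convexOn.2 (Set.mem_univ (x j)) (Set.mem_univ (y j))
      one_half_pos.le one_half_pos.le (add_halves 1)
  have strict : ‖((1 / 2 : ℝ) • x + (1 / 2 : ℝ) • y) i‖ ^ p.toReal
      < 1 / 2 * ‖x i‖ ^ p.toReal + 1 / 2 * ‖y i‖ ^ p.toReal :=
    (strictConvexOn_norm_rpow hp).2 (Set.mem_univ (x i)) (Set.mem_univ (y i)) hi
      one_half_pos one_half_pos (add_halves 1)
  have hlt := hasSum_lt convexity strict (lp.hasSum_norm hp₀ _)
    (((lp.hasSum_norm hp₀ x).mul_left (1 / 2)).add ((lp.hasSum_norm hp₀ y).mul_left (1 / 2)))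
  rw [hmid, hx, hy, Real.one_rpow] at hlt
  norm_num at hlt

theorem lp_norm_eq_of_hasSum (hp : 0 < p.toReal) {x : lp E p} {c : ℝ} (hc : 0 ≤ c)
    (h : HasSum (fun i => ‖x i‖ ^ p.toReal) (c ^ p.toReal)) : ‖x‖ = c :=
  (Real.rpow_left_inj (lp.norm_nonneg' x) hc hp.ne').1 ((lp.hasSum_norm hp x).unique h)

theorem exists_isometry_lp_of_injective [Fact (1 ≤ p)] {κ F : Type*} [NormedAddCommGroup F]
    (hp : p ≠ ∞) {e : ι → κ} (he : Function.Injective e) :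
    ∃ f : lp (fun _ : ι => F) p → lp (fun _ : κ => F) p, Isometry f := by
  have hp₀ : 0 < p.toReal := ENNReal.toReal_pos (one_pos.trans_le Fact.out).ne' hp
  have hasSum_extend (x : lp (fun _ : ι => F) p) :
      HasSum (fun k => ‖Function.extend e x 0 k‖ ^ p.toReal) (‖x‖ ^ p.toReal) := by
    refine (he.hasSum_iff fun k hk => ?_).1 ?_
    · rw [Function.extend_apply' _ _ _ hk, Pi.zero_apply, norm_zero, Real.zero_rpow hp₀.ne']
    · simpa only [Function.comp_def, he.extend_apply] using lp.hasSum_norm hp₀ x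
  refine ⟨fun x => ⟨Function.extend e x 0, memℓp_gen (hasSum_extend x).summable⟩,
    Isometry.of_dist_eq fun x y => ?_⟩
  rw [dist_eq_norm, dist_eq_norm]
  have extend_sub :
      Function.extend e (x - y) 0 = Function.extend e x 0 - Function.extend e y 0 := by
    simpa only [lp.coeFn_sub, sub_zero] using Function.extend_sub e x y 0 0
  have hsum := hasSum_extend (x - y)
  rw [extend_sub] at hsum
  exact lp_norm_eq_of_hasSum hp₀ (norm_nonneg _) hsum

theorem exists_isometry_lp_nat [Fact (1 ≤ p)] {F : Type*} [NormedAddCommGroup F] [Countable ι]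
    (hp : p ≠ ∞) : ∃ f : lp (fun _ : ι => F) p → lp (fun _ : ℕ => F) p, Isometry f :=
  let ⟨_, he⟩ := exists_injective_nat ι
  exists_isometry_lp_of_injective hp he

theorem exists_isometry_lp_sigma [Fact (1 ≤ p)] {α : ι → Type*} {F : (i : ι) → α i → Type*}
    [∀ i a, NormedAddCommGroup (F i a)] (hp : p ≠ ∞) :
    ∃ f : lp (fun i => lp (F i) p) p → lp (fun s : Σ i, α i => F s.1 s.2) p, Isometry f := by
  have hp₀ : 0 < p.toReal := ENNReal.toReal_pos (one_pos.trans_le Fact.out).ne' hp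
  have hasSum_sigma (x : lp (fun i => lp (F i) p) p) :
      HasSum (fun s : Σ i, α i => ‖x s.1 s.2‖ ^ p.toReal) (‖x‖ ^ p.toReal) := by
    have inner (i : ι) := lp.hasSum_norm hp₀ (x i)
    have outer := lp.hasSum_norm hp₀ x
    refine outer.sigma_of_hasSum inner ((summable_sigma_of_nonneg fun s => by positivity).2
      ⟨fun i => (inner i).summable, ?_⟩)
    simpa only [(inner _).tsum_eq] using outer.summable
  refine ⟨fun x => ⟨fun s => x s.1 s.2, memℓp_gen (hasSum_sigma x).summable⟩,
    Isometry.of_dist_eq fun x y => ?_⟩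
  rw [dist_eq_norm, dist_eq_norm]
  exact lp_norm_eq_of_hasSum hp₀ (norm_nonneg _) (hasSum_sigma (x - y))

end LpSpace

section WeightedSpreading

variable {ι : Type*} {p : ℝ≥0∞} [Fact (1 ≤ p)]

theorem lp_norm_le_sum_of_eq_zero {E : ι → Type*} [∀ i, NormedAddCommGroup (E i)]
    {s : Finset ι} {x : lp E p} (hx : ∀ i ∉ s, x i = 0) : ‖x‖ ≤ ∑ i ∈ s, ‖x i‖ := by
  classical
  have hp : 0 < p := one_pos.trans_le Fact.out
  have hsum : x = ∑ i ∈ s, lp.single p i (x i) := by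
    ext j
    by_cases hj : j ∈ s
    · rw [lp.coeFn_sum, Finset.sum_apply, Finset.sum_eq_single_of_mem j hj
        fun i _ hij => lp.single_apply_ne p i (x i) hij.symm, lp.single_apply_self]
    · rw [hx j hj, lp.coeFn_sum, Finset.sum_apply, Finset.sum_eq_zero
        fun i hi => lp.single_apply_ne p i (x i) (ne_of_mem_of_not_mem hi hj).symm]
  calc ‖x‖ = ‖∑ i ∈ s, lp.single p i (x i)‖ := congrArg norm hsum
    _ ≤ ∑ i ∈ s, ‖lp.single p i (x i)‖ := norm_sum_le _ _
    _ = ∑ i ∈ s, ‖x i‖ := Finset.sum_congr rfl fun i _ => lp.norm_single hp i (x i)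

theorem norm_mul_norm_normalize_sub_normalize_le {V : Type*} [NormedAddCommGroup V]
    [NormedSpace ℝ V] (x y : V) :
    ‖x‖ * ‖NormedSpace.normalize x - NormedSpace.normalize y‖ ≤ 2 * ‖x - y‖ := by
  have hy : ‖NormedSpace.normalize y‖ ≤ 1 := by
    rcases eq_or_ne y 0 with rfl | hy
    · simp
    · exact (NormedSpace.norm_normalize_eq_one_iff.2 hy).le
  have decomposition : ‖x‖ • (NormedSpace.normalize x - NormedSpace.normalize y)
      = (x - y) + (‖y‖ - ‖x‖) • NormedSpace.normalize y := by
    rw [smul_sub, sub_smul, NormedSpace.norm_smul_normalize, NormedSpace.norm_smul_normalize]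
    abel
  calc ‖x‖ * ‖NormedSpace.normalize x - NormedSpace.normalize y‖
      = ‖(x - y) + (‖y‖ - ‖x‖) • NormedSpace.normalize y‖ := by
        rw [← decomposition, norm_smul, norm_norm]
    _ ≤ ‖x - y‖ + |‖y‖ - ‖x‖| * ‖NormedSpace.normalize y‖ := by
        simpa only [norm_smul, Real.norm_eq_abs]
          using norm_add_le (x - y) ((‖y‖ - ‖x‖) • NormedSpace.normalize y)
    _ ≤ ‖x - y‖ + ‖x - y‖ * 1 := by
        gcongr
        rw [norm_sub_rev x y]
        exact abs_norm_sub_norm_le y x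
    _ = 2 * ‖x - y‖ := by ring

theorem mem_Icc_floor_of_abs_sub_lt_one {t : ℝ} {i : ℤ} (h : |t - i| < 1) :
    i ∈ Finset.Icc ⌊t⌋ (⌊t⌋ + 1) := by
  rw [abs_lt] at h
  have hlower : ⌊t⌋ < i + 1 := Int.floor_lt.2 (by push_cast; linarith)
  have hupper : i - 1 ≤ ⌊t⌋ := Int.le_floor.2 (by push_cast; linarith)
  rw [Finset.mem_Icc]
  omega

/-- The piecewise linear bump of height one centred at `t`, sampled at the integers. -/
def tent (p : ℝ≥0∞) (t : ℝ) : lp (fun _ : ℤ => ℝ) p :=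
  ⟨fun i => max 0 (1 - |t - i|), (memℓp_zero ((Finset.finite_toSet _).subset fun _ hi =>
    mem_Icc_floor_of_abs_sub_lt_one (not_le.1 fun h =>
      hi (max_eq_left (sub_nonpos.2 h))))).of_exponent_ge zero_le⟩

theorem tent_apply (p : ℝ≥0∞) (t : ℝ) (i : ℤ) : tent p t i = max 0 (1 - |t - i|) := rfl

theorem tent_apply_eq_zero (p : ℝ≥0∞) {t : ℝ} {i : ℤ} (h : 1 ≤ |t - i|) : tent p t i = 0 :=
  max_eq_left (sub_nonpos.2 h)

theorem norm_tent_apply_sub_tent_apply_le (p : ℝ≥0∞) (t s : ℝ) (i : ℤ) :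
    ‖tent p t i - tent p s i‖ ≤ |t - s| :=
  calc ‖tent p t i - tent p s i‖ ≤ |(1 - |t - i|) - (1 - |s - i|)| := by
        simpa only [tent_apply, max_comm (0 : ℝ), Real.norm_eq_abs]
          using abs_max_sub_max_le_abs (1 - |t - i|) (1 - |s - i|) 0
    _ = |(|s - i| - |t - i|)| := by rw [sub_sub_sub_cancel_left]
    _ ≤ |(s - i) - (t - i)| := abs_abs_sub_abs_le _ _
    _ = |t - s| := by rw [sub_sub_sub_cancel_right, abs_sub_comm]

theorem norm_tent_sub_tent_le (t s : ℝ) : ‖tent p t - tent p s‖ ≤ 4 * |t - s| := by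
  set J := Finset.Icc ⌊t⌋ (⌊t⌋ + 1) ∪ Finset.Icc ⌊s⌋ (⌊s⌋ + 1) with hJ
  have support_subset (i : ℤ) (hi : i ∉ J) : (tent p t - tent p s) i = 0 := by
    rw [hJ, Finset.mem_union, not_or] at hi
    rw [lp.coeFn_sub, Pi.sub_apply,
      tent_apply_eq_zero p (not_lt.1 (mt mem_Icc_floor_of_abs_sub_lt_one hi.1)),
      tent_apply_eq_zero p (not_lt.1 (mt mem_Icc_floor_of_abs_sub_lt_one hi.2)), sub_zero]
  have card_le : J.card ≤ 4 := by
    refine (Finset.card_union_le _ _).trans ?_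
    simp only [Int.card_Icc]
    omega
  calc ‖tent p t - tent p s‖ ≤ ∑ i ∈ J, ‖(tent p t - tent p s) i‖ :=
        lp_norm_le_sum_of_eq_zero support_subset
    _ ≤ J.card • |t - s| :=
        Finset.sum_le_card_nsmul _ _ _ fun i _ => norm_tent_apply_sub_tent_apply_le p t s i
    _ ≤ 4 * |t - s| := by
        rw [nsmul_eq_mul]
        gcongr
        exact_mod_cast card_le

theorem half_le_norm_tent (t : ℝ) : 1 / 2 ≤ ‖tent p t‖ :=
  have hp : p ≠ 0 := (one_pos.trans_le Fact.out).ne'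
  calc (1 / 2 : ℝ) ≤ 1 - |t - round t| := by linarith [abs_sub_round t]
    _ ≤ tent p t (round t) := le_max_right _ _
    _ ≤ ‖tent p t (round t)‖ := Real.le_norm_self _
    _ ≤ ‖tent p t‖ := lp.norm_apply_le_norm hp _ _

/-- A unit vector of `ℓ_p(ℤ)` depending on `t` in a Lipschitz way and supported near `t`. -/
noncomputable def weight (p : ℝ≥0∞) [Fact (1 ≤ p)] (t : ℝ) : lp (fun _ : ℤ => ℝ) p :=
  NormedSpace.normalize (tent p t)

theorem weight_apply_eq_zero {t : ℝ} {i : ℤ} (h : 1 ≤ |t - i|) : weight p t i = 0 := by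
  rw [weight, NormedSpace.normalize, lp.coeFn_smul, Pi.smul_apply, tent_apply_eq_zero p h,
    smul_zero]

theorem norm_weight (t : ℝ) : ‖weight p t‖ = 1 :=
  NormedSpace.norm_normalize_eq_one_iff.2
    (norm_pos_iff.1 (one_half_pos.trans_le (half_le_norm_tent t)))

theorem norm_weight_sub_weight_le (t s : ℝ) : ‖weight p t - weight p s‖ ≤ 16 * |t - s| := by
  have hweight : 1 / 2 * ‖weight p t - weight p s‖ ≤ 2 * ‖tent p t - tent p s‖ :=
    (mul_le_mul_of_nonneg_right (half_le_norm_tent t) (norm_nonneg _)).trans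
      (norm_mul_norm_normalize_sub_normalize_le (tent p t) (tent p s))
  linarith [norm_tent_sub_tent_le (p := p) t s]

section Comparison

variable {E : ι → Type*} [∀ i, NormedAddCommGroup (E i)] {x : lp E p}
  {a : lp (fun _ : ι => ℝ) p} {c : ℝ}

theorem lp_norm_le_mul_norm (hc : 0 ≤ c) (h : ∀ i, ‖x i‖ ≤ c * ‖a i‖) : ‖x‖ ≤ c * ‖a‖ := by
  have hp : p ≠ 0 := (one_pos.trans_le Fact.out).ne'
  calc ‖x‖ ≤ ‖c • a‖ := lp.norm_mono hp fun i => (h i).trans_eq (by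
        rw [lp.coeFn_smul, Pi.smul_apply, norm_smul, Real.norm_of_nonneg hc])
    _ = c * ‖a‖ := by rw [norm_smul, Real.norm_of_nonneg hc]

theorem mul_norm_le_lp_norm (hc : 0 ≤ c) (h : ∀ i, c * ‖a i‖ ≤ ‖x i‖) : c * ‖a‖ ≤ ‖x‖ := by
  have hp : p ≠ 0 := (one_pos.trans_le Fact.out).ne'
  calc c * ‖a‖ = ‖c • a‖ := by rw [norm_smul, Real.norm_of_nonneg hc]
    _ ≤ ‖x‖ := lp.norm_mono hp fun i => (h i).trans_eq' (by
        rw [lp.coeFn_smul, Pi.smul_apply, norm_smul, Real.norm_of_nonneg hc])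

end Comparison

variable {E : Type*} [NormedAddCommGroup E] [NormedSpace ℝ E]

/-- The sequence `v` multiplied coordinatewise by the weights centred at `t`; only the terms of `v`
with index near `t` matter. -/
noncomputable def spread (p : ℝ≥0∞) [Fact (1 ≤ p)] (t : ℝ) (v : ℤ → E) :
    lp (fun _ : ℤ => E) p :=
  ⟨fun i => weight p t i • v i, (memℓp_zero ((Finset.finite_toSet _).subset fun i hi =>
    mem_Icc_floor_of_abs_sub_lt_one (not_le.1 fun h =>
      hi (by rw [weight_apply_eq_zero h, zero_smul])))).of_exponent_ge zero_le⟩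

theorem spread_apply (t : ℝ) (v : ℤ → E) (i : ℤ) : spread p t v i = weight p t i • v i := rfl

theorem spread_sub (t : ℝ) (v w : ℤ → E) : spread p t (v - w) = spread p t v - spread p t w :=
  lp.ext (funext fun i => smul_sub (weight p t i) (v i) (w i))

variable {t s c : ℝ} {v : ℤ → E}

theorem norm_spread_le (hc : 0 ≤ c) (hv : ∀ i : ℤ, |t - i| < 1 → ‖v i‖ ≤ c) :
    ‖spread p t v‖ ≤ c := by
  rw [← mul_one c, ← norm_weight (p := p) t]
  refine lp_norm_le_mul_norm hc fun i => ?_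
  rw [spread_apply, norm_smul, mul_comm]
  rcases lt_or_ge |t - i| 1 with hi | hi
  · gcongr
    exact hv i hi
  · simp [weight_apply_eq_zero hi]

theorem le_norm_spread (hc : 0 ≤ c) (hv : ∀ i : ℤ, |t - i| < 1 → c ≤ ‖v i‖) :
    c ≤ ‖spread p t v‖ := by
  rw [← mul_one c, ← norm_weight (p := p) t]
  refine mul_norm_le_lp_norm hc fun i => ?_
  rw [spread_apply, norm_smul, mul_comm]
  rcases lt_or_ge |t - i| 1 with hi | hi
  · gcongr
    exact hv i hi
  · simp [weight_apply_eq_zero hi]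

theorem norm_spread_sub_spread_le (hc : 0 ≤ c)
    (hv : ∀ i : ℤ, |t - i| < 1 ∨ |s - i| < 1 → ‖v i‖ ≤ c) :
    ‖spread p t v - spread p s v‖ ≤ c * (16 * |t - s|) := by
  refine (lp_norm_le_mul_norm (a := weight p t - weight p s) hc fun i => ?_).trans
    (mul_le_mul_of_nonneg_left (norm_weight_sub_weight_le t s) hc)
  rw [lp.coeFn_sub, lp.coeFn_sub, Pi.sub_apply, Pi.sub_apply, spread_apply, spread_apply,
    ← sub_smul, norm_smul, mul_comm]
  by_cases hi : |t - i| < 1 ∨ |s - i| < 1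
  · gcongr
    exact hv i hi
  · rw [not_or, not_lt, not_lt] at hi
    simp [weight_apply_eq_zero hi.1, weight_apply_eq_zero hi.2]

end WeightedSpreading

section BilipschitzEmbeddings

variable {A Y Z : Type*} [MetricSpace A] [MetricSpace Y] [MetricSpace Z] {C : ℝ}

theorem IsBilipschitzEmbedding.isometry_comp {f : A → Y} (hf : IsBilipschitzEmbedding C f)
    {g : Y → Z} (hg : Isometry g) : IsBilipschitzEmbedding C (g ∘ f) := by
  simpa only [IsBilipschitzEmbedding, Function.comp_apply, hg.dist_eq] using hf

theorem IsBilipschitzEmbedding.exists_normalized {E : Type*} [NormedAddCommGroup E]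
    [NormedSpace ℝ E] {S : Set A} {f : S → E} (hf : IsBilipschitzEmbedding C f) {O : A}
    (hO : O ∈ S) :
    ∃ g : A → E, g O = 0 ∧ ∀ u ∈ S, ∀ v ∈ S,
      dist u v ≤ ‖g u - g v‖ ∧ ‖g u - g v‖ ≤ C * dist u v := by
  classical
  obtain ⟨r, hr, hf⟩ := hf
  refine ⟨fun u => if hu : u ∈ S then r⁻¹ • (f ⟨u, hu⟩ - f ⟨O, hO⟩) else 0,
    by simp [hO], fun u hu v hv => ?_⟩
  obtain ⟨hlower, hupper⟩ := hf ⟨u, hu⟩ ⟨v, hv⟩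
  rw [Subtype.dist_eq] at hlower hupper
  simp only [dif_pos hu, dif_pos hv]
  rw [← smul_sub, sub_sub_sub_cancel_right, norm_smul, Real.norm_of_nonneg (inv_pos.2 hr).le,
    ← dist_eq_norm, inv_mul_eq_div, le_div_iff₀ hr, div_le_iff₀ hr]
  exact ⟨by linarith, by linarith⟩

end BilipschitzEmbeddings

section Gluing

theorem mul_abs_log_one_add_sub_log_one_add_le {s r : ℝ} (hs : 0 ≤ s) (hsr : s ≤ r) :
    s * |Real.log (1 + r) - Real.log (1 + s)| ≤ r - s := by
  have hs₁ : 0 < 1 + s := by linarith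
  have hr₁ : 0 < 1 + r := by linarith
  have hlog : 0 ≤ Real.log (1 + r) - Real.log (1 + s) :=
    sub_nonneg.2 (Real.log_le_log hs₁ (by linarith))
  calc s * |Real.log (1 + r) - Real.log (1 + s)|
      ≤ (1 + s) * Real.log ((1 + r) / (1 + s)) := by
        rw [abs_of_nonneg hlog, Real.log_div hr₁.ne' hs₁.ne']
        gcongr
        linarith
    _ ≤ (1 + s) * ((1 + r) / (1 + s) - 1) := by
        gcongr
        exact Real.log_le_sub_one_of_pos (div_pos hr₁ hs₁)
    _ = r - s := by
        field_simp
        ring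

variable {A : Type*} [MetricSpace A] {O : A} {δ : ℝ}

/-- The distance to `O` on a logarithmic scale, slowed down by the factor `δ`. -/
noncomputable def logRadius (O : A) (δ : ℝ) (x : A) : ℝ := δ * Real.log (1 + dist x O)

theorem mem_closedBall_of_abs_logRadius_sub_lt_one (hδ : 0 < δ) {x : A} {i : ℤ}
    (h : |logRadius O δ x - i| < 1) : x ∈ Metric.closedBall O (Real.exp ((i + 1) / δ)) := by
  have hdist : 0 < 1 + dist x O := by positivity
  have hlog : Real.log (1 + dist x O) < (i + 1) / δ := by
    rw [lt_div_iff₀ hδ, mul_comm, ← logRadius]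
    linarith [(abs_lt.1 h).2]
  rw [Metric.mem_closedBall]
  linarith [(Real.log_lt_iff_lt_exp hdist).1 hlog]

theorem dist_mul_abs_logRadius_sub_logRadius_le (hδ : 0 ≤ δ) {x u : A}
    (h : dist u O ≤ dist x O) :
    dist u O * |logRadius O δ x - logRadius O δ u| ≤ δ * dist x u :=
  calc dist u O * |logRadius O δ x - logRadius O δ u|
      = δ * (dist u O * |Real.log (1 + dist x O) - Real.log (1 + dist u O)|) := by
        rw [logRadius, logRadius, ← mul_sub, abs_mul, abs_of_nonneg hδ, mul_left_comm]
    _ ≤ δ * (dist x O - dist u O) := by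
        gcongr
        exact mul_abs_log_one_add_sub_log_one_add_le dist_nonneg h
    _ ≤ δ * dist x u := by
        gcongr
        linarith [dist_triangle x u O]

variable {E : Type*} [NormedAddCommGroup E] [NormedSpace ℝ E] {p : ℝ≥0∞} [Fact (1 ≤ p)]

/-- The maps `g i : A → E`, the `i`-th being used on the annulus around `O` where `logRadius O δ` is
close to `i`, combined into a single map with values in `ℓ_p(ℤ, E)`. -/
noncomputable def glue (p : ℝ≥0∞) [Fact (1 ≤ p)] (O : A) (δ : ℝ) (g : ℤ → A → E) (x : A) :
    lp (fun _ : ℤ => E) p :=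
  spread p (logRadius O δ x) fun i => g i x

section

variable {C : ℝ} {g : ℤ → A → E} (hδ : 0 < δ) (hC : 0 ≤ C) (hgO : ∀ i, g i O = 0)
  (hg : ∀ i : ℤ, ∀ u ∈ Metric.closedBall O (Real.exp ((i + 1) / δ)),
    ∀ v ∈ Metric.closedBall O (Real.exp ((i + 1) / δ)),
      dist u v ≤ ‖g i u - g i v‖ ∧ ‖g i u - g i v‖ ≤ C * dist u v)

include hδ hC hgO hg

theorem norm_spread_logRadius_sub_glue_le {x u : A} (h : dist u O ≤ dist x O) :
    ‖spread p (logRadius O δ x) (fun i => g i u) - glue p O δ g u‖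
      ≤ 16 * δ * C * dist x u := by
  have norm_le (i : ℤ) (hi : |logRadius O δ x - i| < 1 ∨ |logRadius O δ u - i| < 1) :
      ‖g i u‖ ≤ C * dist u O := by
    have hu : u ∈ Metric.closedBall O (Real.exp ((i + 1) / δ)) :=
      hi.elim (fun hx => h.trans (mem_closedBall_of_abs_logRadius_sub_lt_one hδ hx))
        (mem_closedBall_of_abs_logRadius_sub_lt_one hδ)
    simpa only [hgO, sub_zero]
      using (hg i u hu O (Metric.mem_closedBall_self (Real.exp_pos _).le)).2
  calc ‖spread p (logRadius O δ x) (fun i => g i u) - glue p O δ g u‖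
      ≤ C * dist u O * (16 * |logRadius O δ x - logRadius O δ u|) :=
        norm_spread_sub_spread_le (by positivity) norm_le
    _ = 16 * C * (dist u O * |logRadius O δ x - logRadius O δ u|) := by ring
    _ ≤ 16 * C * (δ * dist x u) :=
        mul_le_mul_of_nonneg_left (dist_mul_abs_logRadius_sub_logRadius_le hδ.le h)
          (by positivity)
    _ = 16 * δ * C * dist x u := by ring

theorem dist_glue_bounds (x u : A) :
    (1 - 16 * δ * C) * dist x u ≤ dist (glue p O δ g x) (glue p O δ g u) ∧
      dist (glue p O δ g x) (glue p O δ g u) ≤ (C + 16 * δ * C) * dist x u := by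
  wlog h : dist u O ≤ dist x O generalizing x u
  · simpa only [dist_comm] using this u x (le_of_not_ge h)
  have near (i : ℤ) (hi : |logRadius O δ x - i| < 1) :
      dist x u ≤ ‖g i x - g i u‖ ∧ ‖g i x - g i u‖ ≤ C * dist x u :=
    have hx := mem_closedBall_of_abs_logRadius_sub_lt_one hδ hi
    hg i x hx u (h.trans hx)
  set main := spread p (logRadius O δ x) ((fun i => g i x) - fun i => g i u) with hmain
  have main_lower : dist x u ≤ ‖main‖ := le_norm_spread dist_nonneg fun i hi => (near i hi).1
  have main_upper : ‖main‖ ≤ C * dist x u :=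
    norm_spread_le (by positivity) fun i hi => (near i hi).2
  set error := spread p (logRadius O δ x) (fun i => g i u) - glue p O δ g u
  have error_le : ‖error‖ ≤ 16 * δ * C * dist x u :=
    norm_spread_logRadius_sub_glue_le hδ hC hgO hg h
  have hsum : glue p O δ g x - glue p O δ g u = main + error := by
    rw [hmain, spread_sub, sub_add_sub_cancel, glue]
  rw [dist_eq_norm, hsum]
  constructor
  · linarith [norm_sub_le_norm_add main error]
  · linarith [norm_add_le main error]

end

theorem exists_isBilipschitzEmbedding_lp_of_finite (hA : MetricLocallyFinite A) {C ε : ℝ}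
    (hC : 0 < C) (hε : 0 < ε)
    (h : ∀ S : Set A, S.Finite → ∃ f : S → E, IsBilipschitzEmbedding C f) :
    ∃ f : A → lp (fun _ : ℤ => E) p, IsBilipschitzEmbedding ((1 + ε) * C) f := by
  rcases isEmpty_or_nonempty A with hempty | ⟨⟨O⟩⟩
  · exact ⟨hempty.elim, 1, one_pos, hempty.elim⟩
  obtain ⟨δ, hδ⟩ : ∃ δ, δ = ε / (16 * (1 + (1 + ε) * C)) := ⟨_, rfl⟩
  have hδ₀ : 0 < δ := by rw [hδ]; positivity
  have local_embedding (i : ℤ) :=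
    let ⟨_, hf⟩ := h _ (hA O (Real.exp ((i + 1) / δ)))
    hf.exists_normalized (Metric.mem_closedBall_self (Real.exp_pos _).le)
  choose g hgO hg using local_embedding
  have lower_eq : 1 - 16 * δ * C = (1 + C) / (1 + (1 + ε) * C) := by
    rw [hδ]
    field_simp
    ring
  have upper_eq : C + 16 * δ * C = (1 - 16 * δ * C) * ((1 + ε) * C) := by
    rw [hδ]
    field_simp
    ring
  refine ⟨glue p O δ g, 1 - 16 * δ * C, by rw [lower_eq]; positivity, fun u v => ?_⟩
  rw [← upper_eq]
  exact dist_glue_bounds hδ₀ hC.le hgO hg u v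

end Gluing

theorem exists_isBilipschitzEmbedding_lp_nat_of_finite {p : ℝ≥0∞} [Fact (1 ≤ p)] (hp : p ≠ ∞)
    {A : Type*} [MetricSpace A] (hA : MetricLocallyFinite A) {F : Type*} [NormedAddCommGroup F]
    [NormedSpace ℝ F] {C ε : ℝ} (hC : 0 < C) (hε : 0 < ε)
    (h : ∀ S : Set A, S.Finite →
      ∃ f : S → lp (fun _ : ℕ => F) p, IsBilipschitzEmbedding C f) :
    ∃ f : A → lp (fun _ : ℕ => F) p, IsBilipschitzEmbedding ((1 + ε) * C) f := by
  obtain ⟨f, hf⟩ := exists_isBilipschitzEmbedding_lp_of_finite (p := p) hA hC hε h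
  obtain ⟨flatten, hflatten⟩ :=
    exists_isometry_lp_sigma (F := fun (_ : ℤ) (_ : ℕ) => F) (p := p) hp
  obtain ⟨reindex, hreindex⟩ := exists_isometry_lp_nat (ι := Σ _ : ℤ, ℕ) (F := F) hp
  exact ⟨_, hf.isometry_comp (hreindex.comp hflatten)⟩

section SimpleFunctions

open MeasureTheory

variable {α : Type*} [MeasurableSpace α]

/-- The simple function with values in `ι → β` whose coordinates are the simple functions `f i`. -/
def simpleFuncPi {ι β : Type*} [Finite ι] (f : ι → SimpleFunc α β) : SimpleFunc α (ι → β) where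
  toFun a i := f i a
  measurableSet_fiber' v := by
    have fiber_eq : (fun a i => f i a) ⁻¹' {v} = ⋂ i, f i ⁻¹' {v i} := by
      ext a
      simp [funext_iff]
    rw [fiber_eq]
    exact MeasurableSet.iInter fun i => (f i).measurableSet_fiber (v i)
  finite_range' := (Set.Finite.pi fun i => (f i).finite_range).subset <|
    Set.range_subset_iff.2 fun a i _ => Set.mem_range_self a

variable {E : Type*} [NormedAddCommGroup E] {p : ℝ≥0∞} {μ : Measure α}

theorem norm_rpow_eq_sum_of_ae_eq_comp (hp₀ : p ≠ 0) (hp : p ≠ ∞) {β : Type*}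
    (F : SimpleFunc α β) {φ : β → E} {f : Lp E p μ} (hf : f =ᵐ[μ] φ ∘ F) :
    ‖f‖ ^ p.toReal = ∑ b ∈ F.range, μ.real (F ⁻¹' {b}) * ‖φ b‖ ^ p.toReal := by
  have hq : p.toReal ≠ 0 := ENNReal.toReal_ne_zero.2 ⟨hp₀, hp⟩
  have eLpNorm_eq : eLpNorm f p μ ^ p.toReal
      = ∑ b ∈ F.range, ‖φ b‖ₑ ^ p.toReal * μ (F ⁻¹' {b}) :=
    calc eLpNorm f p μ ^ p.toReal = ∫⁻ a, (F.map fun b => ‖φ b‖ₑ ^ p.toReal) a ∂μ := by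
          rw [eLpNorm_congr_ae hf, eLpNorm_eq_lintegral_rpow_enorm_toReal hp₀ hp,
            ← ENNReal.rpow_mul, one_div_mul_cancel hq, ENNReal.rpow_one]
          rfl
      _ = ∑ b ∈ F.range, ‖φ b‖ₑ ^ p.toReal * μ (F ⁻¹' {b}) := by
          rw [SimpleFunc.lintegral_eq_lintegral, SimpleFunc.map_lintegral]
  have summand_ne_top : ∀ b ∈ F.range, ‖φ b‖ₑ ^ p.toReal * μ (F ⁻¹' {b}) ≠ ∞ :=
    ENNReal.sum_ne_top.1
      (eLpNorm_eq ▸ ENNReal.rpow_ne_top_of_nonneg ENNReal.toReal_nonneg (Lp.eLpNorm_ne_top f))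
  rw [Lp.norm_def, ENNReal.toReal_rpow, eLpNorm_eq, ENNReal.toReal_sum summand_ne_top]
  refine Finset.sum_congr rfl fun b _ => ?_
  rw [ENNReal.toReal_mul, ← ENNReal.toReal_rpow, toReal_enorm, mul_comm, Measure.real]

theorem norm_indicatorConstLp_sub_of_disjoint {s t : Set α} (hs : MeasurableSet s)
    (ht : MeasurableSet t) (hμs : μ s ≠ ∞) (hμt : μ t ≠ ∞) (hst : Disjoint s t) (c d : E) :
    ‖indicatorConstLp p hs hμs c - indicatorConstLp p ht hμt d‖
      = ‖indicatorConstLp p hs hμs c + indicatorConstLp p ht hμt d‖ := by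
  rw [Lp.norm_def, Lp.norm_def]
  refine congrArg ENNReal.toReal (eLpNorm_congr_norm_ae ?_)
  filter_upwards [Lp.coeFn_sub (indicatorConstLp p hs hμs c) (indicatorConstLp p ht hμt d),
    Lp.coeFn_add (indicatorConstLp p hs hμs c) (indicatorConstLp p ht hμt d),
    indicatorConstLp_coeFn (p := p) (hs := hs) (hμs := hμs) (c := c),
    indicatorConstLp_coeFn (p := p) (hs := ht) (hμs := hμt) (c := d)] with x hsub hadd hxs hxt
  rw [hsub, hadd, Pi.sub_apply, Pi.add_apply, hxs, hxt]
  by_cases hx : x ∈ s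
  · simp [hst.notMem_of_mem_left hx]
  · simp [hx]

variable [NormedSpace ℝ E] [Fact (1 ≤ p)]

theorem exists_isometry_lp_nat_of_finite_simpleFunc (hp : p ≠ ∞) {S : Set (Lp E p μ)}
    (hS : S.Finite) (hsimple : ∀ f ∈ S, f ∈ Lp.simpleFunc E p μ) :
    ∃ g : S → lp (fun _ : ℕ => E) p, Isometry g := by
  have : Finite S := hS
  have hp₀ : p ≠ 0 := (one_pos.trans_le Fact.out).ne'
  have hq : 0 < p.toReal := ENNReal.toReal_pos hp₀ hp
  let simple (f : S) : Lp.simpleFunc E p μ := ⟨f, hsimple f f.2⟩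
  let F : SimpleFunc α (S → E) := simpleFuncPi fun f => Lp.simpleFunc.toSimpleFunc (simple f)
  have ae_eq (f : S) : (f : Lp E p μ) =ᵐ[μ] fun a => F a f :=
    (Lp.simpleFunc.toSimpleFunc_eq_toFun (simple f)).symm
  let g : S → lp (fun _ : F.range => E) p := fun f =>
    ⟨fun b => μ.real (F ⁻¹' {b.1}) ^ (1 / p.toReal) • b.1 f, Memℓp.all _⟩
  have norm_g_apply (f h : S) (b : F.range) : ‖(g f - g h) b‖ ^ p.toReal
      = μ.real (F ⁻¹' {b.1}) * ‖b.1 f - b.1 h‖ ^ p.toReal := by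
    rw [lp.coeFn_sub, Pi.sub_apply, ← smul_sub, norm_smul, Real.norm_of_nonneg (by positivity),
      Real.mul_rpow (by positivity) (norm_nonneg _), ← Real.rpow_mul measureReal_nonneg,
      one_div_mul_cancel hq.ne', Real.rpow_one]
  have g_isometry : Isometry g := Isometry.of_dist_eq fun f h => by
    have ae_eq_sub : ((f - h : Lp E p μ)) =ᵐ[μ] (fun v : S → E => v f - v h) ∘ F := by
      filter_upwards [Lp.coeFn_sub (f : Lp E p μ) h, ae_eq f, ae_eq h] with a hsub hf hh
      rw [hsub, Pi.sub_apply, hf, hh, Function.comp_apply]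
    rw [Subtype.dist_eq, dist_eq_norm, dist_eq_norm]
    refine lp_norm_eq_of_hasSum hq (norm_nonneg _) ?_
    simp only [norm_g_apply]
    rw [norm_rpow_eq_sum_of_ae_eq_comp hp₀ hp F ae_eq_sub, ← Finset.sum_coe_sort F.range]
    exact hasSum_fintype _
  obtain ⟨reindex, hreindex⟩ := exists_isometry_lp_nat (ι := F.range) (F := E) hp
  exact ⟨reindex ∘ g, hreindex.comp g_isometry⟩

end SimpleFunctions

section DyadicSteps

open MeasureTheory

variable {p : ℝ≥0∞}

/-- The function equal to `c` on the interval `(s, t]` and to `0` elsewhere, as an element of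
`L_p(ℝ)`. -/
noncomputable def rect (p : ℝ≥0∞) (s t c : ℝ) : Lp ℝ p (volume : Measure ℝ) :=
  indicatorConstLp p (measurableSet_Ioc (a := s) (b := t)) measure_Ioc_lt_top.ne c

theorem norm_rect_rpow (hp : 0 < p.toReal) {s t : ℝ} (hst : s ≤ t) (c : ℝ) :
    ‖rect p s t c‖ ^ p.toReal = |c| ^ p.toReal * (t - s) := by
  obtain ⟨hp₀, hp_top⟩ := ENNReal.toReal_pos_iff.1 hp
  have hlength : 0 ≤ t - s := sub_nonneg.2 hst
  rw [rect, norm_indicatorConstLp hp₀.ne' hp_top.ne, Real.volume_real_Ioc_of_le hst,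
    Real.norm_eq_abs, Real.mul_rpow (abs_nonneg c) (Real.rpow_nonneg hlength _),
    ← Real.rpow_mul hlength, one_div_mul_cancel hp.ne', Real.rpow_one]

theorem rect_add_rect {s t u : ℝ} (hst : s ≤ t) (htu : t ≤ u) (c : ℝ) :
    rect p s t c + rect p t u c = rect p s u c := by
  simp only [rect, ← indicatorConstLp_disjoint_union measurableSet_Ioc measurableSet_Ioc
    measure_Ioc_lt_top.ne measure_Ioc_lt_top.ne (Set.Ioc_disjoint_Ioc_of_le le_rfl) c,
    Set.Ioc_union_Ioc_eq_Ioc hst htu]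

theorem norm_rect_sub_rect (s t u c d : ℝ) :
    ‖rect p s t c - rect p t u d‖ = ‖rect p s t c + rect p t u d‖ :=
  norm_indicatorConstLp_sub_of_disjoint _ _ _ _ (Set.Ioc_disjoint_Ioc_of_le le_rfl) c d

/-- The multiple `2 ^ n` of the indicator function of `(0, j / 2 ^ n]`. -/
noncomputable def step (p : ℝ≥0∞) (n j : ℕ) : Lp ℝ p (volume : Measure ℝ) :=
  rect p 0 (j / 2 ^ n) (2 ^ n)

theorem step_zero_right (p : ℝ≥0∞) (n : ℕ) : step p n 0 = 0 := by
  simp only [step, rect, Nat.cast_zero, zero_div, Set.Ioc_self, indicatorConstLp_empty]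

theorem step_mem_simpleFunc (p : ℝ≥0∞) (n j : ℕ) : step p n j ∈ Lp.simpleFunc ℝ p volume :=
  (Lp.simpleFunc.indicatorConst p measurableSet_Ioc measure_Ioc_lt_top.ne ((2 : ℝ) ^ n)).2

theorem step_add_one_two_mul (p : ℝ≥0∞) (n j : ℕ) :
    step p (n + 1) (2 * j) = (2 : ℝ) • step p n j := by
  have hquot : ((2 * j : ℕ) : ℝ) / 2 ^ (n + 1) = j / 2 ^ n := by
    push_cast
    field_simp
    ring
  rw [step, hquot, step, rect, rect, two_smul, indicatorConstLp_add, pow_succ, mul_two]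

theorem step_add_rect (p : ℝ≥0∞) (n : ℕ) {j m : ℕ} (hjm : j ≤ m) :
    step p n j + rect p (j / 2 ^ n) (m / 2 ^ n) (2 ^ n) = step p n m :=
  rect_add_rect (by positivity) (by gcongr) _

theorem norm_step_sub_step_rpow (hp : 0 < p.toReal) (n : ℕ) {j m : ℕ} (hjm : j ≤ m) :
    ‖step p n m - step p n j‖ ^ p.toReal = (2 ^ n) ^ p.toReal * ((m - j) / 2 ^ n) := by
  rw [← step_add_rect p n hjm, add_sub_cancel_left, norm_rect_rpow hp (by gcongr),
    abs_of_pos (by positivity), sub_div]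

theorem norm_step_rpow (hp : 0 < p.toReal) (n j : ℕ) :
    ‖step p n j‖ ^ p.toReal = (2 ^ n) ^ p.toReal * (j / 2 ^ n) := by
  simpa only [step_zero_right, sub_zero, Nat.cast_zero]
    using norm_step_sub_step_rpow hp n (Nat.zero_le j)

theorem norm_step_rpow_eq_add (hp : 0 < p.toReal) (n : ℕ) {j m : ℕ} (hjm : j ≤ m) :
    ‖step p n m‖ ^ p.toReal
      = ‖step p n j‖ ^ p.toReal + ‖step p n m - step p n j‖ ^ p.toReal := by
  rw [norm_step_rpow hp, norm_step_rpow hp, norm_step_sub_step_rpow hp n hjm]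
  ring

theorem norm_step_add_one_sub_step (p : ℝ≥0∞) (n : ℕ) {j m : ℕ} (hjm : j ≤ m) :
    ‖step p (n + 1) (2 * j) - step p n m‖ = ‖step p n m‖ := by
  rw [← step_add_rect p n hjm, step_add_one_two_mul, two_smul, add_sub_add_left_eq_sub]
  exact norm_rect_sub_rect _ _ _ _ _

/-- The set of all multiples `2 ^ n` of indicator functions of `(0, j / 2 ^ n]` in `L_p(ℝ)`. As a
metric space it is the counterexample to an isometric version of the embedding theorem. -/
def dyadicSteps (p : ℝ≥0∞) : Set (Lp ℝ p (volume : Measure ℝ)) :=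
  Set.range fun z : ℕ × ℕ => step p z.1 z.2

theorem finite_setOf_mem_dyadicSteps_norm_le (hp : 1 < p.toReal) (D : ℝ) :
    {f ∈ dyadicSteps p | ‖f‖ ≤ D}.Finite := by
  have hp₀ : 0 < p.toReal := one_pos.trans hp
  obtain ⟨L, hL⟩ := pow_unbounded_of_one_lt (D ^ p.toReal)
    (Real.one_lt_rpow one_lt_two (sub_pos.2 hp))
  have indices_finite : ((Finset.range L ×ˢ Finset.range (⌊D ^ p.toReal⌋₊ + 1) : Finset (ℕ × ℕ)) :
      Set (ℕ × ℕ)).Finite := Finset.finite_toSet _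
  refine ((indices_finite.image fun z => step p z.1 z.2).insert 0).subset ?_
  rintro _ ⟨⟨⟨n, j⟩, rfl⟩, hD⟩
  rcases Nat.eq_zero_or_pos j with rfl | hj
  · exact Or.inl (step_zero_right p n)
  have hone : 1 ≤ ((2 : ℝ) ^ (p.toReal - 1)) ^ n :=
    one_le_pow₀ (Real.one_le_rpow one_le_two (sub_nonneg.2 hp.le))
  have hj' : (1 : ℝ) ≤ j := by exact_mod_cast hj
  have hpow : ((2 : ℝ) ^ (p.toReal - 1)) ^ n * j ≤ D ^ p.toReal :=
    calc ((2 : ℝ) ^ (p.toReal - 1)) ^ n * j = ‖step p n j‖ ^ p.toReal := by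
          rw [norm_step_rpow hp₀, Real.rpow_sub_one two_ne_zero, div_pow,
            Real.rpow_pow_comm zero_le_two]
          ring
      _ ≤ D ^ p.toReal := Real.rpow_le_rpow ENNReal.toReal_nonneg hD hp₀.le
  refine Or.inr ⟨(n, j), ?_, rfl⟩
  rw [Finset.mem_coe, Finset.mem_product, Finset.mem_range, Finset.mem_range, Nat.lt_succ_iff]
  constructor
  · exact (pow_lt_pow_iff_right₀ (Real.one_lt_rpow one_lt_two (sub_pos.2 hp))).1
      (by nlinarith)
  · exact Nat.le_floor (by nlinarith)

end DyadicSteps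

theorem eq_two_smul_of_norm_eq {V : Type*} [NormedAddCommGroup V] [NormedSpace ℝ V]
    [StrictConvexSpace ℝ V] {x y : V} (hy : ‖y‖ = 2 * ‖x‖) (hyx : ‖y - x‖ = ‖x‖) :
    y = (2 : ℝ) • x := by
  have hmid : x = midpoint ℝ 0 y := by
    apply eq_midpoint_of_dist_eq_half
    · rw [dist_zero_left, dist_zero_left, hy]
      ring
    · rw [dist_zero_left, dist_eq_norm, norm_sub_rev, hyx, hy]
      ring
  rw [hmid, midpoint_eq_smul_add, zero_add, smul_invOf_smul]

/-- The vectors `w n j` are the images of the functions `step p n j` under an isometry that maps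
`0` to `0`. -/
structure IsStepImage {V : Type*} [NormedAddCommGroup V] (p : ℝ≥0∞) (w : ℕ → ℕ → V) : Prop where
  norm_sub : ∀ n j m k, ‖w n j - w m k‖ = ‖step p n j - step p m k‖
  apply_zero_zero : w 0 0 = 0

namespace IsStepImage

variable {p : ℝ≥0∞}

theorem norm_apply {V : Type*} [NormedAddCommGroup V] {w : ℕ → ℕ → V} (hw : IsStepImage p w)
    (n j : ℕ) : ‖w n j‖ = ‖step p n j‖ := by
  simpa only [hw.apply_zero_zero, step_zero_right, sub_zero] using hw.norm_sub n j 0 0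

variable [Fact (1 ≤ p)]

section StrictConvexSpace

variable {V : Type*} [NormedAddCommGroup V] [NormedSpace ℝ V] [StrictConvexSpace ℝ V]
  {w : ℕ → ℕ → V}

theorem apply_add_one_two_mul (hw : IsStepImage p w) (n j : ℕ) :
    w (n + 1) (2 * j) = (2 : ℝ) • w n j := by
  apply eq_two_smul_of_norm_eq
  · rw [hw.norm_apply, hw.norm_apply, step_add_one_two_mul, norm_smul, Real.norm_two]
  · rw [hw.norm_sub, hw.norm_apply, step_add_one_two_mul, two_smul, add_sub_cancel_right]

theorem apply_two_pow (hw : IsStepImage p w) (n : ℕ) : w n (2 ^ n) = (2 : ℝ) ^ n • w 0 1 := by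
  induction n with
  | zero => rw [pow_zero, pow_zero, one_smul]
  | succ n ih => rw [pow_succ', hw.apply_add_one_two_mul, ih, smul_smul, pow_succ']

end StrictConvexSpace

variable {ι : Type*} {E : ι → Type*} [∀ i, NormedAddCommGroup (E i)]
  {w : ℕ → ℕ → lp E p}

theorem two_pow_mul_norm_coord_sub_rpow_le (hw : IsStepImage p w) (hp : 0 < p.toReal) (n j : ℕ)
    (i : ι) : 2 ^ n * ‖w n (j + 1) i - w n j i‖ ^ p.toReal ≤ (2 ^ n) ^ p.toReal := by
  have norm_rpow_le : ‖w n (j + 1) i - w n j i‖ ^ p.toReal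
      ≤ (2 ^ n) ^ p.toReal * (1 / 2 ^ n) :=
    calc ‖w n (j + 1) i - w n j i‖ ^ p.toReal ≤ ‖w n (j + 1) - w n j‖ ^ p.toReal := by
          gcongr
          exact lp.norm_apply_le_norm (one_pos.trans_le Fact.out).ne' (w n (j + 1) - w n j) i
      _ = (2 ^ n) ^ p.toReal * (1 / 2 ^ n) := by
          rw [hw.norm_sub, norm_step_sub_step_rpow hp n j.le_succ]
          push_cast
          ring
  rwa [mul_one_div, le_div_iff₀' (by positivity)] at norm_rpow_le

variable [∀ i, InnerProductSpace ℝ (E i)]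

theorem coord_eq_zero_or_eq (hw : IsStepImage p w) (hp : 1 < p.toReal) (hp₂ : p.toReal ≠ 2) (n : ℕ)
    {j m : ℕ} (hjm : j ≤ m) (i : ι) : w n j i = 0 ∨ w n j i = w n m i := by
  have := strictConvexSpace_lp (E := E) hp
  have norm_add : ‖w n j + (w n m - w n j)‖ = ‖step p n m‖ := by
    rw [add_sub_cancel, hw.norm_apply]
  have norm_sub : ‖w n j - (w n m - w n j)‖ = ‖step p n m‖ := by
    rw [← sub_add, sub_add_eq_add_sub, ← two_smul ℝ, ← hw.apply_add_one_two_mul, hw.norm_sub,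
      norm_step_add_one_sub_step p n hjm]
  have clarkson_equality : ‖w n j + (w n m - w n j)‖ ^ p.toReal
      + ‖w n j - (w n m - w n j)‖ ^ p.toReal
      = 2 * (‖w n j‖ ^ p.toReal + ‖w n m - w n j‖ ^ p.toReal) := by
    rw [norm_add, norm_sub, hw.norm_apply, hw.norm_sub,
      ← norm_step_rpow_eq_add (one_pos.trans hp) n hjm, two_mul]
  refine (eq_zero_or_eq_zero_of_norm_add_rpow_add_norm_sub_rpow (one_pos.trans hp) hp₂
    clarkson_equality i).imp_right fun h => ?_
  exact (sub_eq_zero.1 h).symm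

theorem coord_eq_zero_of_le_two_pow (hw : IsStepImage p w) (hp : 1 < p.toReal)
    (hp₂ : p.toReal ≠ 2) {n : ℕ} {i : ι} (hn : 1 < 2 ^ n * ‖w 0 1 i‖ ^ p.toReal) {j : ℕ}
    (hj : j ≤ 2 ^ n) : w n j i = 0 := by
  have := strictConvexSpace_lp (E := E) hp
  have final_coord : w n (2 ^ n) i = (2 : ℝ) ^ n • w 0 1 i := by
    rw [hw.apply_two_pow, lp.coeFn_smul, Pi.smul_apply]
  induction j with
  | zero =>
    have norm_zero_right : ‖w n 0‖ = 0 := by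
      rw [hw.norm_apply, step_zero_right, MeasureTheory.Lp.norm_zero]
    rw [norm_eq_zero.1 norm_zero_right, lp.coeFn_zero, Pi.zero_apply]
  | succ j ih =>
    refine (hw.coord_eq_zero_or_eq hp hp₂ n hj i).resolve_right fun hjump => ?_
    have jump_le := hw.two_pow_mul_norm_coord_sub_rpow_le (one_pos.trans hp) n j i
    rw [ih (by omega), sub_zero, hjump, final_coord, norm_smul, norm_pow, Real.norm_two,
      Real.mul_rpow (by positivity) (norm_nonneg _), mul_left_comm] at jump_le
    exact hn.not_ge (le_of_mul_le_mul_left (by rwa [mul_one]) (by positivity))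

theorem coord_apply_zero_one_eq_zero (hw : IsStepImage p w) (hp : 1 < p.toReal)
    (hp₂ : p.toReal ≠ 2) (i : ι) : w 0 1 i = 0 := by
  have := strictConvexSpace_lp (E := E) hp
  by_contra hi
  have hpos : 0 < ‖w 0 1 i‖ ^ p.toReal := by positivity
  obtain ⟨n, hn⟩ := pow_unbounded_of_one_lt (‖w 0 1 i‖ ^ p.toReal)⁻¹ (one_lt_two (α := ℝ))
  have hzero := hw.coord_eq_zero_of_le_two_pow hp hp₂
    ((inv_lt_iff_one_lt_mul₀ hpos).1 hn) le_rfl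
  rw [hw.apply_two_pow, lp.coeFn_smul, Pi.smul_apply] at hzero
  exact (smul_ne_zero (by positivity) hi) hzero

end IsStepImage

theorem not_isStepImage_lp {p : ℝ≥0∞} [Fact (1 ≤ p)] {ι : Type*} {E : ι → Type*}
    [∀ i, NormedAddCommGroup (E i)] [∀ i, InnerProductSpace ℝ (E i)] (hp : 1 < p.toReal)
    (hp₂ : p.toReal ≠ 2) (w : ℕ → ℕ → lp E p) : ¬ IsStepImage p w := fun hw => by
  have hp₀ : 0 < p.toReal := one_pos.trans hp
  have eq_zero : w 0 1 = 0 := lp.ext (funext (hw.coord_apply_zero_one_eq_zero hp hp₂))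
  have norm_rpow_eq_one : ‖w 0 1‖ ^ p.toReal = 1 := by
    rw [hw.norm_apply, norm_step_rpow hp₀]
    simp
  rw [eq_zero, norm_zero, Real.zero_rpow hp₀.ne'] at norm_rpow_eq_one
  exact zero_ne_one norm_rpow_eq_one

section DyadicStepSpace

variable {p : ℝ≥0∞} [Fact (1 ≤ p)]

theorem metricLocallyFinite_dyadicSteps (hp : 1 < p.toReal) :
    MetricLocallyFinite (dyadicSteps p) := fun x R => by
  refine ((finite_setOf_mem_dyadicSteps_norm_le hp (R + ‖x.1‖)).preimage
    Subtype.val_injective.injOn).subset fun y hy => ⟨y.2, ?_⟩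
  rw [Metric.mem_closedBall, Subtype.dist_eq, dist_eq_norm] at hy
  linarith [norm_le_norm_sub_add y.1 x.1]

theorem exists_isometry_lp_nat_of_finite_dyadicSteps (hp : p ≠ ∞) {S : Set (dyadicSteps p)}
    (hS : S.Finite) : ∃ f : S → lp (fun _ : ℕ => ℝ) p, Isometry f := by
  obtain ⟨g, hg⟩ := exists_isometry_lp_nat_of_finite_simpleFunc hp (hS.image Subtype.val) (by
    rintro _ ⟨⟨_, z, rfl⟩, -, rfl⟩
    exact step_mem_simpleFunc p z.1 z.2)
  exact ⟨fun x => g ⟨x, Set.mem_image_of_mem _ x.2⟩, fun x y => hg _ _⟩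

theorem not_exists_isometry_dyadicSteps_lp {ι : Type*} {E : ι → Type*}
    [∀ i, NormedAddCommGroup (E i)] [∀ i, InnerProductSpace ℝ (E i)] (hp : 1 < p.toReal)
    (hp₂ : p.toReal ≠ 2) : ¬ ∃ f : dyadicSteps p → lp E p, Isometry f := by
  rintro ⟨f, hf⟩
  let image (n j : ℕ) : lp E p := f ⟨step p n j, (n, j), rfl⟩
  have norm_image_sub (n j m k : ℕ) :
      ‖image n j - image m k‖ = ‖step p n j - step p m k‖ := by
    rw [← dist_eq_norm, ← dist_eq_norm, hf.dist_eq, Subtype.dist_eq]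
  exact not_isStepImage_lp hp hp₂ (fun n j => image n j - image 0 0)
    ⟨fun n j m k => by rw [sub_sub_sub_cancel_right, norm_image_sub], sub_self _⟩

end DyadicStepSpace

theorem ellp_D_eq_one_plus
    (p : ℝ≥0∞) [Fact (1 ≤ p)] (hp1 : 1 < p) (hptop : p ≠ ∞) (hp2 : p ≠ 2) :
    (∀ (ε C : ℝ), 0 < ε → 1 ≤ C →
      ∀ (A : Type*) [MetricSpace A], MetricLocallyFinite A →
        (∀ S : Set A, S.Finite →
          ∃ f : S → lp (fun _ : ℕ => ℝ) p, IsBilipschitzEmbedding C f) →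
        ∃ f : A → lp (fun _ : ℕ => ℝ) p, IsBilipschitzEmbedding ((1 + ε) * C) f) ∧
    (∃ (M : Type) (_ : MetricSpace M), MetricLocallyFinite M ∧
      (∀ S : Set M, S.Finite → ∃ f : S → lp (fun _ : ℕ => ℝ) p, Isometry f) ∧
      ¬ ∃ f : M → lp (fun _ : ℕ => ℝ) p, Isometry f) := by
  have one_lt : 1 < p.toReal := by
    rwa [← ENNReal.toReal_one, ENNReal.toReal_lt_toReal ENNReal.one_ne_top hptop]
  have ne_two : p.toReal ≠ 2 := by
    rwa [← ENNReal.toReal_ofNat, Ne, ENNReal.toReal_eq_toReal_iff' hptop ENNReal.ofNat_ne_top]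
  constructor
  · intro ε C hε hC A _ hA hfinite
    exact exists_isBilipschitzEmbedding_lp_nat_of_finite hptop hA (one_pos.trans_le hC) hε hfinite
  · exact ⟨dyadicSteps p, inferInstance, metricLocallyFinite_dyadicSteps one_lt,
      fun S hS => exists_isometry_lp_nat_of_finite_dyadicSteps hptop hS,
      not_exists_isometry_dyadicSteps_lp one_lt ne_two⟩
end

section
/- There exists a locally finite metric space M such that every finite subset of M admits an isometric embedding into ℓ_1, yet M itself admits no isometric embedding into ℓ_1. -/
open scoped ENNReal

/-!
The space consists of subsets of the line with the metric `d(A, B) = |A ∆ B|`: the empty set, as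
origin, and, for every `n`, the `n` intervals of length `1 / n` partitioning `[0, 1)`, each enlarged
by a tag, a set meeting no other point of the space. The tags are long enough to make the space
locally finite. A finite family of sets generates finitely many atoms, whose measures serve as
coordinates of an isometric embedding of the family into `ℓ₁`.

Relative to the empty set, the Gromov product of `A` and `B` is `|A ∩ B|`, and tags do not
contribute to it. Hence the products of the unit interval with the `n` pieces are `1 / n` each and
add up to `1`, while those of two distinct pieces of the same partition vanish. In `ℓ₁` the Gromov
product is the sum of the Gromov products of the coordinates. The line is `0`-hyperbolic, so in
each coordinate at most one piece has a nonzero product with the unit interval; that product is at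
most `1 / n`, and also at most the size of the coordinate. The sum of these bounds over the
coordinates tends to `0` as `n → ∞`, by dominated convergence, so it cannot remain at least `1`.
-/

open Filter MeasureTheory Set
open scoped Function symmDiff Topology

noncomputable section

variable {X Y ι κ α β : Type*}

section GromovProduct

variable [PseudoMetricSpace X] [PseudoMetricSpace Y]

/-- The Gromov product `(x | y)_o = (d(x, o) + d(y, o) - d(x, y)) / 2`; in a tree, it is the
length of the common part of the geodesics from `o` to `x` and to `y`. -/
def gromovProduct (o x y : X) : ℝ := (dist x o + dist y o - dist x y) / 2

theorem gromovProduct_nonneg (o x y : X) : 0 ≤ gromovProduct o x y := by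
  rw [gromovProduct]
  linarith [dist_triangle_right x y o]

theorem gromovProduct_le_dist (o x y : X) : gromovProduct o x y ≤ dist x o := by
  rw [gromovProduct]
  linarith [dist_triangle_left y o x]

theorem gromovProduct_map_isometry {f : X → Y} (hf : Isometry f) (o x y : X) :
    gromovProduct (f o) (f x) (f y) = gromovProduct o x y := by
  simp only [gromovProduct, hf.dist_eq]

theorem min_gromovProduct_le_gromovProduct (o x y z : ℝ) :
    min (gromovProduct o x y) (gromovProduct o x z) ≤ gromovProduct o y z := by
  simp only [gromovProduct, Real.dist_eq]
  grind

theorem sum_gromovProduct_le_of_pairwise_eq_zero [Fintype κ] {o x C : ℝ} {y : κ → ℝ}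
    (hC : 0 ≤ C) (hy : Pairwise fun j k => gromovProduct o (y j) (y k) = 0)
    (hxy : ∀ k, gromovProduct o x (y k) ≤ C) :
    ∑ k, gromovProduct o x (y k) ≤ C := by
  by_cases h : ∃ k, gromovProduct o x (y k) ≠ 0
  · obtain ⟨k, hk⟩ := h
    rw [Fintype.sum_eq_single k]
    · exact hxy k
    · intro j hjk
      have hmin := min_gromovProduct_le_gromovProduct o x (y j) (y k)
      rw [hy hjk, min_le_iff] at hmin
      have hj_nonneg := gromovProduct_nonneg o x (y j)
      have hk_nonneg := gromovProduct_nonneg o x (y k)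
      exact hmin.elim (fun h => h.antisymm hj_nonneg) fun h => absurd (h.antisymm hk_nonneg) hk
  · push Not at h
    simpa only [h, Finset.sum_const_zero] using hC

end GromovProduct

local notation "ℓ¹(" ι ")" => lp (fun _ : ι => ℝ) 1

theorem hasSum_dist_lp_one (u v : ℓ¹(ι)) : HasSum (fun i => dist (u i) (v i)) (dist u v) := by
  simpa [dist_eq_norm] using lp.hasSum_norm (p := 1) (by simp) (u - v)

theorem hasSum_gromovProduct_lp_one (o u v : ℓ¹(ι)) :
    HasSum (fun i => gromovProduct (o i) (u i) (v i)) (gromovProduct o u v) :=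
  (((hasSum_dist_lp_one u o).add (hasSum_dist_lp_one v o)).sub
    (hasSum_dist_lp_one u v)).div_const 2

theorem gromovProduct_apply_eq_zero {o u v : ℓ¹(ι)} (h : gromovProduct o u v = 0) (i : ι) :
    gromovProduct (o i) (u i) (v i) = 0 := by
  have hsum := hasSum_gromovProduct_lp_one o u v
  rw [h, hasSum_zero_iff_of_nonneg fun i => gromovProduct_nonneg _ _ _] at hsum
  exact congrFun hsum i

theorem gromovProduct_apply_le (o u v : ℓ¹(ι)) (i : ι) :
    gromovProduct (o i) (u i) (v i) ≤ gromovProduct o u v :=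
  le_hasSum (hasSum_gromovProduct_lp_one o u v) i fun _ _ => gromovProduct_nonneg _ _ _

theorem sum_gromovProduct_le_tsum_min [Fintype κ] {o u : ℓ¹(ι)} {v : κ → ℓ¹(ι)} {ε : ℝ}
    (hε : 0 ≤ ε) (hv : Pairwise fun j k => gromovProduct o (v j) (v k) = 0)
    (huv : ∀ k, gromovProduct o u (v k) ≤ ε) :
    ∑ k, gromovProduct o u (v k) ≤ ∑' i, min (dist (u i) (o i)) ε := by
  have hsum : HasSum (fun i => ∑ k, gromovProduct (o i) (u i) (v k i))
      (∑ k, gromovProduct o u (v k)) :=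
    hasSum_sum fun k _ => hasSum_gromovProduct_lp_one o u (v k)
  have hmin : Summable fun i => min (dist (u i) (o i)) ε :=
    (hasSum_dist_lp_one u o).summable.of_nonneg_of_le
      (fun i => le_min dist_nonneg hε) fun i => min_le_left _ _
  refine hasSum_le (fun i => ?_) hsum hmin.hasSum
  refine sum_gromovProduct_le_of_pairwise_eq_zero (le_min dist_nonneg hε)
    (fun j k hjk => gromovProduct_apply_eq_zero (hv hjk) i) fun k => ?_
  exact le_min (gromovProduct_le_dist _ _ _) ((gromovProduct_apply_le o u (v k) i).trans (huv k))

theorem tendsto_tsum_min_nhdsGT_zero {u : ι → ℝ} (hu : Summable u) (hu_nonneg : ∀ i, 0 ≤ u i) :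
    Tendsto (fun ε => ∑' i, min (u i) ε) (𝓝[>] 0) (𝓝 0) := by
  have hlim (i : ι) : Tendsto (fun ε => min (u i) ε) (𝓝[>] 0) (𝓝 0) := by
    have : Tendsto (fun ε => min (u i) ε) (𝓝 0) (𝓝 (min (u i) 0)) :=
      tendsto_const_nhds.min tendsto_id
    rw [min_eq_right (hu_nonneg i)] at this
    exact this.mono_left nhdsWithin_le_nhds
  have hbound : ∀ᶠ ε in 𝓝[>] (0 : ℝ), ∀ i, ‖min (u i) ε‖ ≤ u i := by
    filter_upwards [self_mem_nhdsWithin] with ε hε i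
    rw [Real.norm_of_nonneg (le_min (hu_nonneg i) hε.le)]
    exact min_le_left _ _
  simpa only [tsum_zero] using tendsto_tsum_of_dominated_convergence hu hlim hbound

theorem not_isometry_lp_one_of_divisible [PseudoMetricSpace X] {o x : X} {c : ℝ} (hc : 0 < c)
    (hdiv : ∀ ε > 0, ∃ (n : ℕ) (y : Fin n → X),
      (Pairwise fun j k => gromovProduct o (y j) (y k) = 0) ∧
      (∀ k, gromovProduct o x (y k) ≤ ε) ∧ c ≤ ∑ k, gromovProduct o x (y k))
    (f : X → ℓ¹(ι)) : ¬ Isometry f := by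
  intro hf
  have hle : ∀ ε > 0, c ≤ ∑' i, min (dist (f x i) (f o i)) ε := by
    intro ε hε
    obtain ⟨n, y, hy, hxy, hcy⟩ := hdiv ε hε
    simp only [← gromovProduct_map_isometry hf] at hy hxy hcy
    exact hcy.trans (sum_gromovProduct_le_tsum_min hε.le hy hxy)
  have htendsto := tendsto_tsum_min_nhdsGT_zero (hasSum_dist_lp_one (f x) (f o)).summable
    fun _ => dist_nonneg
  exact hc.not_ge (ge_of_tendsto htendsto (eventually_mem_nhdsWithin.mono hle))

theorem hasSum_indicator_measureReal_singleton [Countable κ] [MeasurableSpace κ]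
    [MeasurableSingletonClass κ] {ν : Measure κ} {s : Set κ} (hs : ν s ≠ ∞) :
    HasSum (s.indicator fun k => ν.real {k}) (ν.real s) := by
  have htsum := ν.tsum_indicator_apply_singleton s s.to_countable.measurableSet
  have hne_top := htsum.trans_ne hs
  have hsum := ENNReal.hasSum_toReal hne_top
  rw [← ENNReal.tsum_toReal_eq (ENNReal.ne_top_of_tsum_ne_top hne_top), htsum] at hsum
  rwa [measureReal_def, show (fun k => ν.real {k}) = ENNReal.toReal ∘ fun k => ν {k} from rfl,
    indicator_comp_of_zero ENNReal.toReal_zero]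

/-- A family of sets of finite measure represents the metric `d` of its index space if
`d(x, y) = μ(A x ∆ A y)`, i.e. if `x ↦ 1_{A x}` is an isometric embedding into `L¹(μ)`. -/
structure IsSymmDiffEmbedding [PseudoMetricSpace X] [MeasurableSpace α] (μ : Measure α)
    (A : X → Set α) : Prop where
  measurableSet (x : X) : MeasurableSet (A x)
  measure_ne_top (x : X) : μ (A x) ≠ ∞
  dist_eq (x y : X) : dist x y = μ.real (A x ∆ A y)

namespace IsSymmDiffEmbedding

variable [PseudoMetricSpace X] [PseudoMetricSpace Y] [MeasurableSpace α] [MeasurableSpace β]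
  {μ : Measure α} {A : X → Set α}

theorem comp_isometry (hA : IsSymmDiffEmbedding μ A) {g : Y → X} (hg : Isometry g) :
    IsSymmDiffEmbedding μ (A ∘ g) where
  measurableSet y := hA.measurableSet (g y)
  measure_ne_top y := hA.measure_ne_top (g y)
  dist_eq y z := by rw [← hg.dist_eq, hA.dist_eq, Function.comp_apply, Function.comp_apply]

theorem gromovProduct_eq (hA : IsSymmDiffEmbedding μ A) {o : X} (ho : A o = ∅) (x y : X) :
    gromovProduct o x y = μ.real (A x ∩ A y) := by
  have hx := measureReal_inter_add_sdiff (μ := μ) (s := A x) (hA.measurableSet y)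
    (hA.measure_ne_top x)
  have hy := measureReal_inter_add_sdiff (μ := μ) (s := A y) (hA.measurableSet x)
    (hA.measure_ne_top y)
  have hxy := measureReal_symmDiff_eq (hA.measurableSet x) (hA.measurableSet y)
    (hA.measure_ne_top x) (hA.measure_ne_top y)
  rw [inter_comm] at hy
  simp only [gromovProduct, hA.dist_eq, ho, ← bot_eq_empty, symmDiff_bot]
  linarith

theorem map {σ : α → β} {B : X → Set β} (hA : IsSymmDiffEmbedding μ fun x => σ ⁻¹' B x)
    (hσ : Measurable σ) (hB : ∀ x, MeasurableSet (B x)) :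
    IsSymmDiffEmbedding (μ.map σ) B where
  measurableSet := hB
  measure_ne_top x := by simpa only [Measure.map_apply hσ (hB x)] using hA.measure_ne_top x
  dist_eq x y := by
    rw [map_measureReal_apply hσ ((hB x).symmDiff (hB y)), hA.dist_eq, preimage_symmDiff]

theorem exists_isometry_lp_one_of_countable [Countable κ] [MeasurableSpace κ]
    [MeasurableSingletonClass κ] {ν : Measure κ} {B : X → Set κ} (hB : IsSymmDiffEmbedding ν B) :
    ∃ f : X → ℓ¹(κ), Isometry f := by
  let coord (x : X) : κ → ℝ := (B x).indicator fun k => ν.real {k}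
  have hcoord (x : X) : Memℓp (coord x) 1 := by
    refine memℓp_gen ?_
    simpa using (hasSum_indicator_measureReal_singleton (hB.measure_ne_top x)).summable.norm
  refine ⟨fun x => ⟨coord x, hcoord x⟩, .of_dist_eq fun x y => ?_⟩
  have hsum := hasSum_indicator_measureReal_singleton
    (measure_symmDiff_ne_top (hB.measure_ne_top x) (hB.measure_ne_top y))
  rw [hB.dist_eq]
  refine (hasSum_dist_lp_one _ _).unique ?_
  convert hsum using 2 with k
  rw [Real.dist_eq, ← abs_indicator_symmDiff,
    abs_of_nonneg (indicator_nonneg (fun _ _ => measureReal_nonneg) k)]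

theorem exists_isometry_lp_one_nat [Finite X] (hA : IsSymmDiffEmbedding μ A) :
    ∃ f : X → ℓ¹(ℕ), Isometry f := by
  obtain ⟨code, hcode⟩ := Countable.exists_injective_nat (Set X)
  let atom (a : α) : ℕ := code {x | a ∈ A x}
  have hatom : Measurable atom := by
    refine (measurable_of_countable code).comp (measurable_set_iff.2 fun x => ?_)
    exact measurableSet_setOfPred.1 (hA.measurableSet x)
  have hpreimage (x : X) : atom ⁻¹' (code '' {s | x ∈ s}) = A x := by
    ext a
    simp [atom, hcode.eq_iff]
  have hcodes : IsSymmDiffEmbedding (μ.map atom) fun x => code '' {s | x ∈ s} :=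
    map (by simpa only [hpreimage] using hA) hatom fun _ => .of_discrete
  exact hcodes.exists_isometry_lp_one_of_countable

end IsSymmDiffEmbedding

theorem finite_setOf_two_pow_encode_le [Encodable κ] (R : ℝ) :
    {k : κ | 2 ^ Encodable.encode k ≤ R}.Finite := by
  obtain ⟨B, hB⟩ := pow_unbounded_of_one_lt R (one_lt_two (α := ℝ))
  refine ((finite_Iio B).preimage Encodable.encode_injective.injOn).subset fun k hk => ?_
  exact (pow_lt_pow_iff_right₀ one_lt_two).1 (lt_of_le_of_lt hk hB)

/-- A cell `⟨n, k⟩` stands for the `k`-th of the `n` intervals of length `1 / n` that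
partition `[0, 1)`. -/
abbrev Cell := Σ n : ℕ, Fin n

namespace Cell

/-- The subinterval `[k / n, (k + 1) / n)` of `[0, 1)` named by the cell `⟨n, k⟩`. -/
def interval (c : Cell) : Set ℝ := Ico ((c.2 : ℕ) / c.1 : ℝ) (((c.2 : ℕ) + 1 : ℕ) / c.1)

/-- A set belonging to the cell `c` alone; its length exceeds every bound on all but finitely many
cells, which makes the final metric space locally finite. -/
def tag (c : Cell) : Set ℝ := Ico (2 ^ Encodable.encode c) (2 ^ (Encodable.encode c + 1))

theorem interval_subset (c : Cell) : c.interval ⊆ Ico 0 1 := by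
  obtain ⟨n, k⟩ := c
  refine Ico_subset_Ico (by positivity) (div_le_one_of_le₀ ?_ n.cast_nonneg)
  exact_mod_cast k.isLt

theorem volume_real_interval (c : Cell) : volume.real c.interval = 1 / c.1 := by
  rw [interval, Real.volume_real_Ico_of_le (by gcongr; omega), ← sub_div]
  simp

theorem volume_real_tag (c : Cell) : volume.real c.tag = 2 ^ Encodable.encode c := by
  rw [tag, Real.volume_real_Ico_of_le (by gcongr <;> simp), pow_succ]
  ring

theorem interval_one_zero : interval ⟨1, 0⟩ = Ico 0 1 := by
  simp [interval]

theorem pairwise_disjoint_interval (n : ℕ) :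
    Pairwise (Disjoint on fun k : Fin n => interval ⟨n, k⟩) := by
  have hmono : Monotone fun k : ℕ => (k / n : ℝ) := fun _ _ h => by dsimp only; gcongr
  exact fun j k hjk => hmono.pairwise_disjoint_on_Ico_succ (Fin.val_ne_of_ne hjk)

theorem pairwise_disjoint_tag : Pairwise (Disjoint on tag) := by
  have hmono : Monotone fun m : ℕ => (2 ^ m : ℝ) := pow_right_mono₀ one_le_two
  exact fun c d hcd =>
    hmono.pairwise_disjoint_on_Ico_succ (Encodable.encode_injective.ne hcd)

theorem disjoint_interval_tag (c d : Cell) : Disjoint c.interval d.tag := by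
  refine disjoint_left.2 fun t htc htd => ?_
  exact (interval_subset c htc).2.not_ge ((one_le_pow₀ one_le_two).trans htd.1)

end Cell

/-- The points of the locally finite space: an origin and all cells. -/
inductive CellSpace
  | origin
  | cell (c : Cell)

namespace CellSpace

/-- The set representing a point, the origin being represented by `∅`. -/
def region : CellSpace → Set ℝ
  | origin => ∅
  | cell c => c.interval ∪ c.tag

theorem measurableSet_region : ∀ x : CellSpace, MeasurableSet x.region
  | origin => .empty
  | cell _ => measurableSet_Ico.union measurableSet_Ico

theorem volume_region_ne_top : ∀ x : CellSpace, volume x.region ≠ ∞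
  | origin => by simp [region]
  | cell _ => measure_union_ne_top measure_Ico_lt_top.ne measure_Ico_lt_top.ne

theorem region_inter_region {c d : Cell} (h : c ≠ d) :
    region (cell c) ∩ region (cell d) = c.interval ∩ d.interval := by
  simp only [region, union_inter_distrib_right, inter_union_distrib_left, union_empty,
    (Cell.disjoint_interval_tag c d).inter_eq, (Cell.disjoint_interval_tag d c).symm.inter_eq,
    (Cell.pairwise_disjoint_tag h).inter_eq]

theorem disjoint_region_tag {c : Cell} : ∀ {x : CellSpace}, x ≠ cell c → Disjoint x.region c.tag
  | origin, _ => empty_disjoint _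
  | cell d, h => (Cell.disjoint_interval_tag d c).union_left
      (Cell.pairwise_disjoint_tag fun hdc => h (congrArg cell hdc))

theorem two_pow_encode_le_volume_symmDiff {x : CellSpace} {c : Cell} (h : x ≠ cell c) :
    2 ^ Encodable.encode c ≤ volume.real (x.region ∆ region (cell c)) := by
  rw [← c.volume_real_tag]
  refine measureReal_mono (fun t ht => ?_)
    (measure_symmDiff_ne_top x.volume_region_ne_top (volume_region_ne_top (cell c)))
  exact .inr ⟨.inr ht, (disjoint_region_tag h).notMem_of_mem_right ht⟩

instance : MetricSpace CellSpace where
  dist x y := volume.real (x.region ∆ y.region)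
  dist_self x := by simp
  dist_comm x y := by rw [symmDiff_comm]
  dist_triangle x y z :=
    measureReal_symmDiff_le z.region x.volume_region_ne_top y.volume_region_ne_top
  eq_of_dist_eq_zero {x y} h := by
    by_contra hne
    cases y with
    | cell c => exact (two_pow_encode_le_volume_symmDiff hne).not_gt (h ▸ by positivity)
    | origin =>
      cases x with
      | origin => exact hne rfl
      | cell c =>
        rw [symmDiff_comm] at h
        exact (two_pow_encode_le_volume_symmDiff (Ne.symm hne)).not_gt (h ▸ by positivity)

theorem isSymmDiffEmbedding_region : IsSymmDiffEmbedding volume region where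
  measurableSet := measurableSet_region
  measure_ne_top := volume_region_ne_top
  dist_eq _ _ := rfl

theorem metricLocallyFinite : MetricLocallyFinite CellSpace := by
  intro x R
  refine (((finite_setOf_two_pow_encode_le R).image cell).insert origin |>.insert x).subset ?_
  intro y hy
  rw [Metric.mem_closedBall'] at hy
  by_cases hxy : y = x
  · exact .inl hxy
  · cases y with
    | origin => exact .inr (.inl rfl)
    | cell c =>
      exact .inr (.inr ⟨c, (two_pow_encode_le_volume_symmDiff (Ne.symm hxy)).trans hy, rfl⟩)

theorem gromovProduct_origin {c d : Cell} (h : c ≠ d) :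
    gromovProduct origin (cell c) (cell d) = volume.real (c.interval ∩ d.interval) := by
  rw [isSymmDiffEmbedding_region.gromovProduct_eq rfl, region_inter_region h]

theorem gromovProduct_origin_of_ne {n : ℕ} {j k : Fin n} (h : j ≠ k) :
    gromovProduct origin (cell ⟨n, j⟩) (cell ⟨n, k⟩) = 0 := by
  rw [gromovProduct_origin (by simpa using h), (Cell.pairwise_disjoint_interval n h).inter_eq,
    measureReal_empty]

theorem gromovProduct_origin_unit {n : ℕ} (hn : n ≠ 1) (k : Fin n) :
    gromovProduct origin (cell ⟨1, 0⟩) (cell ⟨n, k⟩) = 1 / n := by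
  rw [gromovProduct_origin fun h => hn (congrArg Sigma.fst h).symm, Cell.interval_one_zero,
    inter_eq_right.2 (Cell.interval_subset _), Cell.volume_real_interval]

theorem not_isometry_lp_one (f : CellSpace → ℓ¹(ι)) : ¬ Isometry f := by
  refine not_isometry_lp_one_of_divisible (o := origin) (x := cell ⟨1, 0⟩) one_pos
    (fun ε hε => ?_) f
  obtain ⟨n, hn, hnε⟩ : ∃ n : ℕ, 1 < n ∧ 1 / (n : ℝ) ≤ ε :=
    ((eventually_gt_atTop 1).and
      (tendsto_one_div_atTop_nhds_zero_nat.eventually_le_const hε)).exists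
  refine ⟨n, fun k => cell ⟨n, k⟩, fun j k => gromovProduct_origin_of_ne, ?_, ?_⟩
  · simpa only [gromovProduct_origin_unit hn.ne', forall_const] using fun _ => hnε
  · have : (n : ℝ) ≠ 0 := by positivity
    simp [gromovProduct_origin_unit hn.ne', this]

end CellSpace

theorem ell1_not_isometrically_finitely_determined_general :
    ∃ (M : Type) (_ : MetricSpace M), MetricLocallyFinite M ∧
      (∀ S : Set M, S.Finite → ∃ f : S → ℓ¹(ℕ), Isometry f) ∧
      ∀ ι : Type*, ¬ ∃ f : M → ℓ¹(ι), Isometry f := by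
  refine ⟨CellSpace, inferInstance, CellSpace.metricLocallyFinite, fun S hS => ?_, ?_⟩
  · have := hS.to_subtype
    exact (CellSpace.isSymmDiffEmbedding_region.comp_isometry
      isometry_subtype_coe).exists_isometry_lp_one_nat
  · rintro ι ⟨f, hf⟩
    exact CellSpace.not_isometry_lp_one f hf

end

theorem ell1_not_isometrically_finitely_determined :
    ∃ (M : Type) (_ : MetricSpace M), MetricLocallyFinite M ∧
      (∀ S : Set M, S.Finite → ∃ f : S → lp (fun _ : ℕ => ℝ) 1, Isometry f) ∧
      ¬ ∃ f : M → lp (fun _ : ℕ => ℝ) 1, Isometry f := by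
  obtain ⟨M, _, hM, hfinite, hinfinite⟩ := ell1_not_isometrically_finitely_determined_general
  exact ⟨M, _, hM, hfinite, hinfinite ℕ⟩
end

section
/- Let Z be a finite-dimensional real normed space and F a real Banach space. For every ε > 0 there exists δ > 0 (depending on ε, Z, F) such that: if N is a δ-net of the closed unit ball B_Z of Z and N admits an isometric embedding into F, then there exists an injective continuous linear map T : Z → F satisfying ‖z‖ ≤ ‖T z‖ ≤ (1+ε)‖z‖ for all z ∈ Z; in particular F contains a linear subspace whose Banach–Mazur distance to Z does not exceed 1+ε. -/
/-!
Extend the embedding of the net to a continuous map `g` that distorts distances in the unit ball by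
at most a small additive error, and let `T` be the derivative at `0` of a mollification of `g` by a
bump function `φ`, namely `T y = -∫ φ'(x) y • g x`.

*Upper bound.* For a functional `p`, the scalar function `p ∘ g` is within a small error of a
genuinely `‖p‖`-Lipschitz function. Mollifying the latter gives a derivative of norm at most `‖p‖`,
and the error costs at most its size times `∫ ‖φ'‖`.

*Lower bound.* Let the norm of `Z` be differentiable at `z`, with derivative `l`, and let `p` norm
`g z - g (-z)`. Then `p ∘ g` nearly grows from `-z` to `z` at the maximal speed allowed, which
squeezes `p (g y)` between `c - ‖z - y‖` and `c' + ‖z + y‖`; both are nearly `c'' + l y` for small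
`y`. Mollifying an affine function returns its linear part, so `p (T z)` is nearly `l z = ‖z‖`. By
Rademacher's theorem, finitely many such `z` form a net of the unit ball.
-/

open Filter MeasureTheory Metric Set Topology
open scoped NNReal

section MetricSpace

variable {X Y : Type*} [PseudoMetricSpace X] [PseudoMetricSpace Y]

theorem exists_finite_subset_dist_lt_of_isCompact {K S : Set X} {ρ : ℝ} (hK : IsCompact K)
    (hS : ∀ x ∈ K, ∃ y ∈ S, dist x y < ρ) :
    ∃ t ⊆ S, t.Finite ∧ ∀ x ∈ K, ∃ y ∈ t, dist x y < ρ := by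
  have hcover : K ⊆ ⋃ y ∈ S, ball y ρ := fun x hx => by simpa using hS x hx
  obtain ⟨t, htS, ht, hKt⟩ := hK.elim_finite_subcover_image (fun _ _ => isOpen_ball) hcover
  exact ⟨t, htS, ht, fun x hx => by simpa using hKt hx⟩

theorem exists_lipschitzWith_abs_sub_le {s : Set X} {u : X → ℝ} {K : ℝ≥0} {α : ℝ}
    (hu : ∀ x ∈ s, ∀ y ∈ s, u x ≤ u y + K * dist x y + α) :
    ∃ v : X → ℝ, LipschitzWith K v ∧ ∀ x ∈ s, |u x - v x| ≤ α := by
  rcases s.eq_empty_or_nonempty with rfl | ⟨z, hz⟩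
  · exact ⟨0, LipschitzWith.const' 0, by simp⟩
  have : Nonempty s := ⟨z, hz⟩
  -- The McShane extension formula.
  let v : X → ℝ := fun x => ⨅ y : s, u y + K * dist x y
  have hbdd (x : X) : BddBelow (range fun y : s => u y + K * dist x y) := by
    refine ⟨u z - K * dist x z - α, ?_⟩
    rintro _ ⟨y, rfl⟩
    have htri : (K : ℝ) * dist z y ≤ K * (dist x z + dist x y) := by
      gcongr
      exact dist_triangle_left z y x
    linarith [hu z hz y y.2]
  refine ⟨v, LipschitzWith.of_le_add_mul K fun x x' => ?_, fun x hx => ?_⟩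
  · rw [← sub_le_iff_le_add]
    refine le_ciInf fun y => ?_
    have htri : (K : ℝ) * dist x y ≤ K * (dist x x' + dist x' y) := by
      gcongr
      exact dist_triangle x x' y
    linarith [ciInf_le (hbdd x) y]
  · have hle : v x ≤ u x := by simpa using ciInf_le (hbdd x) ⟨x, hx⟩
    have hge : u x - α ≤ v x := le_ciInf fun y => by linarith [hu x hx y y.2]
    rw [abs_of_nonneg (by linarith)]
    linarith

/-- `g` is an approximate isometry on `s` with additive error `δ`: it changes distances between
points of `s` by at most `δ`. No continuity is required. -/
def IsApproxIsometryOn (δ : ℝ) (g : X → Y) (s : Set X) : Prop :=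
  ∀ x ∈ s, ∀ x' ∈ s, |dist (g x) (g x') - dist x x'| ≤ δ

namespace IsApproxIsometryOn

variable {δ ρ : ℝ} {g h : X → Y} {s : Set X}

theorem dist_le (hg : IsApproxIsometryOn δ g s) {x x' : X} (hx : x ∈ s) (hx' : x' ∈ s) :
    dist (g x) (g x') ≤ dist x x' + δ := by
  linarith [le_of_abs_le (hg x hx x' hx')]

theorem le_dist (hg : IsApproxIsometryOn δ g s) {x x' : X} (hx : x ∈ s) (hx' : x' ∈ s) :
    dist x x' - δ ≤ dist (g x) (g x') := by
  linarith [neg_le_of_abs_le (hg x hx x' hx')]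

theorem nonneg (hg : IsApproxIsometryOn δ g s) (hs : s.Nonempty) : 0 ≤ δ :=
  let ⟨x, hx⟩ := hs
  (abs_nonneg _).trans (hg x hx x hx)

theorem of_dist_le (hg : IsApproxIsometryOn δ g s) (hgh : ∀ x ∈ s, dist (h x) (g x) ≤ ρ) :
    IsApproxIsometryOn (δ + 2 * ρ) h s := by
  intro x hx x' hx'
  have hdist := dist_dist_dist_le (h x) (h x') (g x) (g x')
  calc |dist (h x) (h x') - dist x x'|
      ≤ |dist (h x) (h x') - dist (g x) (g x')| + |dist (g x) (g x') - dist x x'| :=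
        abs_sub_le _ _ _
    _ ≤ (ρ + ρ) + δ := by
        gcongr
        · exact hdist.trans (add_le_add (hgh x hx) (hgh x' hx'))
        · exact hg x hx x' hx'
    _ = δ + 2 * ρ := by ring

end IsApproxIsometryOn

theorem exists_isApproxIsometryOn_of_isometry_net {N : Set X} {f : N → Y} (hf : Isometry f)
    [Nonempty N] {s : Set X} {ρ : ℝ} (hN : ∀ x ∈ s, ∃ y ∈ N, dist x y ≤ ρ) :
    ∃ g : X → Y, IsApproxIsometryOn (2 * ρ) g s := by
  have hnear : ∀ x ∈ s, ∃ y : N, dist (y : X) x ≤ ρ := fun x hx =>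
    let ⟨y, hy, hxy⟩ := hN x hx
    ⟨⟨y, hy⟩, dist_comm x y ▸ hxy⟩
  choose! π hπ using hnear
  refine ⟨f ∘ π, fun x hx x' hx' => ?_⟩
  rw [Function.comp_apply, Function.comp_apply, hf.dist_eq, Subtype.dist_eq, two_mul]
  exact (dist_dist_dist_le (π x : X) (π x') x x').trans (add_le_add (hπ x hx) (hπ x' hx'))

end MetricSpace

section NormedSpace

variable {E F : Type*} [NormedAddCommGroup E] [NormedSpace ℝ E]
  [NormedAddCommGroup F] [NormedSpace ℝ F]

theorem exists_continuousMap_dist_le {X : Type*} [TopologicalSpace X] [NormalSpace X]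
    [ParacompactSpace X] {s : Set X} (hs : IsClosed s) {g : X → F} {ρ : ℝ}
    (hg : ∀ x ∈ s, ∀ᶠ y in 𝓝[s] x, dist (g x) (g y) ≤ ρ) :
    ∃ h : C(X, F), ∀ x ∈ s, dist (h x) (g x) ≤ ρ := by
  refine exists_continuous_forall_mem_convex_of_local_const
    (t := fun x => {v | x ∈ s → dist v (g x) ≤ ρ}) (fun x => ?_) fun x => ⟨g x, ?_⟩
  · by_cases hx : x ∈ s
    · simpa only [hx, forall_const] using! convex_closedBall (g x) ρ
    · simpa [hx] using convex_univ
  · by_cases hx : x ∈ s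
    · exact eventually_nhdsWithin_iff.1 (hg x hx)
    · filter_upwards [hs.isOpen_compl.mem_nhds hx] with y hy hys using absurd hys hy

theorem IsApproxIsometryOn.exists_continuousMap {X : Type*} [PseudoMetricSpace X] {s : Set X}
    (hs : IsClosed s) {g : X → F} {δ : ℝ} (hδ : 0 < δ) (hg : IsApproxIsometryOn δ g s) :
    ∃ h : C(X, F), IsApproxIsometryOn (5 * δ) h s := by
  obtain ⟨h, hh⟩ := exists_continuousMap_dist_le hs (g := g) (ρ := 2 * δ) fun x hx => by
    filter_upwards [self_mem_nhdsWithin, mem_nhdsWithin_of_mem_nhds (ball_mem_nhds x hδ)]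
      with y hy hyx
    linarith [hg.dist_le hx hy, mem_ball'.1 hyx]
  refine ⟨h, ?_⟩
  convert hg.of_dist_le hh using 1
  ring

theorem exists_isometry_finiteDimensional_submodule {X : Type*} [PseudoEMetricSpace X] [Finite X]
    {f : X → F} (hf : Isometry f) :
    ∃ W : Submodule ℝ F, FiniteDimensional ℝ W ∧ ∃ f' : X → W, Isometry f' :=
  ⟨Submodule.span ℝ (range f), FiniteDimensional.span_of_finite ℝ (finite_range f),
    fun x => ⟨f x, Submodule.subset_span (mem_range_self x)⟩, hf⟩

theorem exists_radius_forall_norm_sub_fderiv_le {f : E → F} {S : Set E} (hS : S.Finite)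
    (hf : ∀ z ∈ S, DifferentiableAt ℝ f z) {κ : ℝ} (hκ : 0 < κ) :
    ∃ r > 0, ∀ z ∈ S, ∀ y ∈ closedBall (0 : E) r,
      ‖f (z + y) - f z - fderiv ℝ f z y‖ ≤ κ * ‖y‖ := by
  have hnhds : ∀ᶠ y in 𝓝 (0 : E), ∀ z ∈ S, ‖f (z + y) - f z - fderiv ℝ f z y‖ ≤ κ * ‖y‖ :=
    (eventually_all_finite hS).2 fun z hz =>
      (hasFDerivAt_iff_isLittleO_nhds_zero.1 (hf z hz).hasFDerivAt).def hκ
  obtain ⟨r, hr, hball⟩ := nhds_basis_closedBall.eventually_iff.1 hnhds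
  exact ⟨r, hr, fun z hz y hy => hball hy z hz⟩

theorem exists_finite_net_differentiableAt_norm [FiniteDimensional ℝ E] {η : ℝ} (hη : 0 < η) :
    ∃ S ⊆ closedBall (0 : E) 1, S.Finite ∧ (∀ z ∈ S, DifferentiableAt ℝ (‖·‖) z) ∧
      ∀ u ∈ closedBall (0 : E) 1, ∃ z ∈ S, dist u z < η := by
  let D : Set E := {z | DifferentiableAt ℝ (‖·‖) z}
  have hdense : closedBall (0 : E) 1 ⊆ closure (ball 0 1 ∩ D) := by
    rw [← closure_ball 0 one_ne_zero]
    exact closure_minimal (dense_differentiableAt_norm.open_subset_closure_inter isOpen_ball)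
      isClosed_closure
  obtain ⟨S, hS, hSfin, hnet⟩ := exists_finite_subset_dist_lt_of_isCompact
    (isCompact_closedBall (0 : E) 1) fun u hu => mem_closure_iff.1 (hdense hu) η hη
  exact ⟨S, fun z hz => ball_subset_closedBall (hS hz).1, hSfin, fun z hz => (hS hz).2, hnet⟩

end NormedSpace

section Mollifier

variable {E F G : Type*} [NormedAddCommGroup E] [NormedSpace ℝ E] [MeasurableSpace E]
  [NormedAddCommGroup F] [NormedSpace ℝ F] [NormedAddCommGroup G] [NormedSpace ℝ G]

/-- The derivative at `0` of the smoothed map `y ↦ ∫ φ (x - y) • g x ∂μ`, with the derivative moved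
onto the kernel `φ` so that it makes sense for nonsmooth `g`. -/
noncomputable def mollifiedDeriv (μ : Measure E) (φ : E → ℝ) (g : E → F) : E →L[ℝ] F :=
  -∫ x, (fderiv ℝ φ x).smulRight (g x) ∂μ

/-- `φ` is a `C¹` mollification kernel of radius `r` for the measure `μ`: a nonnegative function of
integral one supported in the closed ball of radius `r` about `0`. -/
structure IsMollifier (μ : Measure E) (φ : E → ℝ) (r : ℝ) : Prop where
  contDiff : ContDiff ℝ 1 φ
  nonneg : ∀ x, 0 ≤ φ x
  integral_eq_one : ∫ x, φ x ∂μ = 1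
  tsupport_subset : tsupport φ ⊆ closedBall 0 r

theorem IsMollifier.hasCompactSupport [FiniteDimensional ℝ E] {μ : Measure E} {φ : E → ℝ} {r : ℝ}
    (hφ : IsMollifier μ φ r) : HasCompactSupport φ :=
  (isCompact_closedBall 0 r).of_isClosed_subset (isClosed_tsupport φ) hφ.tsupport_subset

section CompactSupport

variable [BorelSpace E] {μ : Measure E} [IsFiniteMeasureOnCompacts μ] {φ : E → ℝ} {g h : E → F}

theorem IsMollifier.integrable [FiniteDimensional ℝ E] {r : ℝ} (hφ : IsMollifier μ φ r) :
    Integrable φ μ :=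
  hφ.contDiff.continuous.integrable_of_hasCompactSupport hφ.hasCompactSupport

theorem integrable_fderiv_smulRight (hφ : ContDiff ℝ 1 φ) (hφc : HasCompactSupport φ)
    (hg : Continuous g) : Integrable (fun x => (fderiv ℝ φ x).smulRight (g x)) μ := by
  have hcont : Continuous fun x => (fderiv ℝ φ x).smulRight (g x) :=
    ((ContinuousLinearMap.smulRightL ℝ E F).continuous.comp
      (hφ.continuous_fderiv one_ne_zero)).clm_apply hg
  refine hcont.integrable_of_hasCompactSupport ((hφc.fderiv (𝕜 := ℝ)).mono fun x hx => ?_)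
  rw [Function.mem_support] at hx ⊢
  contrapose! hx
  ext
  simp [hx]

theorem mollifiedDeriv_apply (hφ : ContDiff ℝ 1 φ) (hφc : HasCompactSupport φ) (hg : Continuous g)
    (y : E) : mollifiedDeriv μ φ g y = -∫ x, fderiv ℝ φ x y • g x ∂μ := by
  rw [mollifiedDeriv, neg_apply,
    ContinuousLinearMap.integral_apply (integrable_fderiv_smulRight hφ hφc hg)]
  simp only [ContinuousLinearMap.smulRight_apply]

theorem map_mollifiedDeriv [CompleteSpace F] [CompleteSpace G] (hφ : ContDiff ℝ 1 φ)
    (hφc : HasCompactSupport φ) (hg : Continuous g) (p : F →L[ℝ] G) (y : E) :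
    p (mollifiedDeriv μ φ g y) = mollifiedDeriv μ φ (fun x => p (g x)) y := by
  have hint : Integrable (fun x => fderiv ℝ φ x y • g x) μ := by
    simpa using (integrable_fderiv_smulRight hφ hφc hg).apply_continuousLinearMap y
  rw [mollifiedDeriv_apply hφ hφc hg, mollifiedDeriv_apply hφ hφc (by fun_prop), map_neg,
    ← p.integral_comp_comm hint]
  simp only [map_smul]

theorem norm_mollifiedDeriv_sub_le (hφ : ContDiff ℝ 1 φ) (hφc : HasCompactSupport φ)
    (hg : Continuous g) (hh : Continuous h) {α : ℝ} (hgh : ∀ x ∈ tsupport φ, ‖g x - h x‖ ≤ α) :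
    ‖mollifiedDeriv μ φ g - mollifiedDeriv μ φ h‖ ≤ (∫ x, ‖fderiv ℝ φ x‖ ∂μ) * α := by
  have hint : Integrable (fderiv ℝ φ) μ :=
    (hφ.continuous_fderiv one_ne_zero).integrable_of_hasCompactSupport (hφc.fderiv (𝕜 := ℝ))
  have hsub : mollifiedDeriv μ φ g - mollifiedDeriv μ φ h
      = -∫ x, (fderiv ℝ φ x).smulRight (g x - h x) ∂μ := by
    rw [mollifiedDeriv, mollifiedDeriv, neg_sub_neg, ← neg_sub, ← integral_sub
      (integrable_fderiv_smulRight hφ hφc hg) (integrable_fderiv_smulRight hφ hφc hh)]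
    congr 2 with x y
    simp [smul_sub]
  rw [hsub, norm_neg, ← integral_mul_const]
  refine norm_integral_le_of_norm_le (hint.norm.mul_const α) (Eventually.of_forall fun x => ?_)
  rw [ContinuousLinearMap.norm_smulRight_apply]
  by_cases hx : x ∈ tsupport φ
  · gcongr
    exact hgh x hx
  · simp [image_eq_zero_of_notMem_tsupport fun hx' => hx (tsupport_fderiv_subset ℝ hx')]

end CompactSupport

section Haar

variable [FiniteDimensional ℝ E] [BorelSpace E] {μ : Measure E} [μ.IsAddHaarMeasure]

theorem mollifiedDeriv_eq_integral_lineDeriv {φ v : E → ℝ} (hφ : ContDiff ℝ 1 φ)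
    (hφc : HasCompactSupport φ) {K : ℝ≥0} (hv : LipschitzWith K v) (y : E) :
    mollifiedDeriv μ φ v y = ∫ x, lineDeriv ℝ v x y * φ x ∂μ := by
  obtain ⟨D, hD⟩ := hφ.lipschitzWith_of_hasCompactSupport hφc one_ne_zero
  have hline (x : E) : lineDeriv ℝ φ x (-y) = -fderiv ℝ φ x y := by
    rw [(hφ.differentiable one_ne_zero x).lineDeriv_eq_fderiv, map_neg]
  rw [mollifiedDeriv_apply hφ hφc hv.continuous, hv.integral_lineDeriv_mul_eq hD hφc]
  simp only [hline, smul_eq_mul, neg_mul, integral_neg]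

namespace IsMollifier

variable {φ : E → ℝ} {r α : ℝ}

theorem mollifiedDeriv_affine (hφ : IsMollifier μ φ r) (c : ℝ) (l : E →L[ℝ] ℝ) :
    mollifiedDeriv μ φ (fun x => c + l x) = l := by
  ext y
  have hline (x : E) : lineDeriv ℝ (fun x => c + l x) x y = l y := by
    rw [(by fun_prop : DifferentiableAt ℝ (fun x => c + l x) x).lineDeriv_eq_fderiv,
      fderiv_const_add, ContinuousLinearMap.fderiv]
  rw [mollifiedDeriv_eq_integral_lineDeriv hφ.contDiff hφ.hasCompactSupport
    ((LipschitzWith.const c).add l.lipschitz)]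
  simp only [hline]
  rw [integral_const_mul, hφ.integral_eq_one, mul_one]

theorem norm_mollifiedDeriv_le_of_lipschitzWith (hφ : IsMollifier μ φ r) {v : E → ℝ} {K : ℝ≥0}
    (hv : LipschitzWith K v) : ‖mollifiedDeriv μ φ v‖ ≤ K := by
  refine ContinuousLinearMap.opNorm_le_bound _ K.coe_nonneg fun y => ?_
  rw [mollifiedDeriv_eq_integral_lineDeriv hφ.contDiff hφ.hasCompactSupport hv]
  calc ‖∫ x, lineDeriv ℝ v x y * φ x ∂μ‖
      ≤ ∫ x, K * ‖y‖ * φ x ∂μ := by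
        refine norm_integral_le_of_norm_le (hφ.integrable.const_mul _)
          (Eventually.of_forall fun x => ?_)
        rw [norm_mul, Real.norm_of_nonneg (hφ.nonneg x)]
        exact mul_le_mul_of_nonneg_right (norm_lineDeriv_le_of_lipschitz ℝ hv) (hφ.nonneg x)
    _ = K * ‖y‖ := by rw [integral_const_mul, hφ.integral_eq_one, mul_one]

variable [CompleteSpace F] {g : E → F}

theorem norm_mollifiedDeriv_le (hφ : IsMollifier μ φ r) (hg : Continuous g) (hα : 0 ≤ α)
    (hgα : ∀ x ∈ closedBall (0 : E) r, ∀ x' ∈ closedBall (0 : E) r,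
      dist (g x) (g x') ≤ dist x x' + α) :
    ‖mollifiedDeriv μ φ g‖ ≤ 1 + (∫ x, ‖fderiv ℝ φ x‖ ∂μ) * α := by
  refine ContinuousLinearMap.opNorm_le_bound _ (by positivity) fun y => ?_
  refine NormedSpace.norm_le_dual_bound ℝ _ (by positivity) fun p => ?_
  obtain ⟨v, hv, hpv⟩ := exists_lipschitzWith_abs_sub_le (u := fun x => p (g x)) (K := ‖p‖₊)
    (s := closedBall (0 : E) r) (α := ‖p‖ * α) fun x hx x' hx' => by
      have hp : p (g x) - p (g x') ≤ ‖p‖ * (dist x x' + α) := by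
        rw [← map_sub]
        refine (le_abs_self _).trans ((p.le_opNorm _).trans ?_)
        gcongr
        exact dist_eq_norm (g x) (g x') ▸ hgα x hx x' hx'
      rw [coe_nnnorm]
      linarith
  have hsub := norm_mollifiedDeriv_sub_le (μ := μ) hφ.contDiff hφ.hasCompactSupport
    (p.continuous.comp hg) hv.continuous fun x hx => hpv x (hφ.tsupport_subset hx)
  have hnorm : ‖mollifiedDeriv μ φ (p ∘ g)‖ ≤ ‖p‖ + (∫ x, ‖fderiv ℝ φ x‖ ∂μ) * (‖p‖ * α) :=
    (norm_le_norm_add_norm_sub' _ _).trans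
      (add_le_add (hφ.norm_mollifiedDeriv_le_of_lipschitzWith hv) hsub)
  rw [map_mollifiedDeriv hφ.contDiff hφ.hasCompactSupport hg p y]
  calc ‖mollifiedDeriv μ φ (p ∘ g) y‖
      ≤ (‖p‖ + (∫ x, ‖fderiv ℝ φ x‖ ∂μ) * (‖p‖ * α)) * ‖y‖ :=
        ContinuousLinearMap.le_of_opNorm_le _ hnorm y
    _ = (1 + (∫ x, ‖fderiv ℝ φ x‖ ∂μ) * α) * ‖y‖ * ‖p‖ := by ring

theorem abs_map_mollifiedDeriv_sub_le (hφ : IsMollifier μ φ r) (hg : Continuous g)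
    (p : F →L[ℝ] ℝ) {c : ℝ} {l : E →L[ℝ] ℝ}
    (hp : ∀ x ∈ closedBall (0 : E) r, |p (g x) - (c + l x)| ≤ α) (y : E) :
    |p (mollifiedDeriv μ φ g y) - l y| ≤ (∫ x, ‖fderiv ℝ φ x‖ ∂μ) * α * ‖y‖ := by
  have hsub := norm_mollifiedDeriv_sub_le (μ := μ) hφ.contDiff hφ.hasCompactSupport
    (p.continuous.comp hg) (h := fun x => c + l x) (by fun_prop)
    fun x hx => hp x (hφ.tsupport_subset hx)
  rw [hφ.mollifiedDeriv_affine] at hsub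
  rw [map_mollifiedDeriv hφ.contDiff hφ.hasCompactSupport hg]
  exact ContinuousLinearMap.le_of_opNorm_le _ hsub y

end IsMollifier

variable (μ) in
theorem exists_isMollifier_one : ∃ φ : E → ℝ, IsMollifier μ φ 1 := by
  let b : ContDiffBump (0 : E) := ⟨1 / 2, 1, by norm_num, by norm_num⟩
  exact ⟨b.normed μ, b.contDiff_normed, b.nonneg_normed, b.integral_normed,
    b.tsupport_normed_eq.subset⟩

theorem IsMollifier.exists_rescale {ψ : E → ℝ} (hψ : IsMollifier μ ψ 1) {r : ℝ} (hr : 0 < r) :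
    ∃ φ : E → ℝ, IsMollifier μ φ r ∧
      ∫ x, ‖fderiv ℝ φ x‖ ∂μ = r⁻¹ * ∫ x, ‖fderiv ℝ ψ x‖ ∂μ := by
  let d := Module.finrank ℝ E
  have hrd : r ^ d ≠ 0 := (pow_pos hr d).ne'
  have hdiff (x : E) : DifferentiableAt ℝ (fun x => ψ (r⁻¹ • x)) x :=
    (hψ.contDiff.differentiable one_ne_zero _).comp x (by fun_prop)
  have hfderiv (x : E) : ‖fderiv ℝ (fun x => (r ^ d)⁻¹ * ψ (r⁻¹ • x)) x‖
      = (r ^ d)⁻¹ * (r⁻¹ * ‖fderiv ℝ ψ (r⁻¹ • x)‖) := by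
    rw [fderiv_const_mul (hdiff x), fderiv_comp_smul, norm_smul, norm_smul,
      Real.norm_of_nonneg (by positivity), Real.norm_of_nonneg (by positivity)]
  refine ⟨fun x => (r ^ d)⁻¹ * ψ (r⁻¹ • x), ⟨?_, fun x => ?_, ?_, ?_⟩, ?_⟩
  · exact contDiff_const.mul (hψ.contDiff.comp (contDiff_const_smul r⁻¹))
  · exact mul_nonneg (by positivity) (hψ.nonneg _)
  · rw [integral_const_mul, Measure.integral_comp_inv_smul_of_nonneg μ ψ hr.le,
      hψ.integral_eq_one, smul_eq_mul, mul_one, inv_mul_cancel₀ hrd]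
  · refine closure_minimal (fun x hx => ?_) isClosed_closedBall
    have hψx : r⁻¹ • x ∈ tsupport ψ := subset_tsupport ψ (right_ne_zero_of_mul hx)
    have hnorm := mem_closedBall_zero_iff.1 (hψ.tsupport_subset hψx)
    rw [norm_smul, Real.norm_of_nonneg (by positivity), inv_mul_le_iff₀ hr, mul_one] at hnorm
    exact mem_closedBall_zero_iff.2 hnorm
  · simp only [hfderiv]
    rw [integral_const_mul, integral_const_mul,
      Measure.integral_comp_inv_smul_of_nonneg μ (fun x => ‖fderiv ℝ ψ x‖) hr.le, smul_eq_mul,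
      mul_left_comm r⁻¹, inv_mul_cancel_left₀ hrd]

end Haar

end Mollifier

section LowerBound

variable {E F : Type*} [NormedAddCommGroup E] [NormedSpace ℝ E]
  [NormedAddCommGroup F] [NormedSpace ℝ F]

theorem IsApproxIsometryOn.abs_map_sub_affine_le {g : E → F} {δ β r : ℝ}
    (hg : IsApproxIsometryOn δ g (closedBall 0 1)) {z : E} (hz : ‖z‖ ≤ 1) {l : E →L[ℝ] ℝ}
    (hl : ∀ y ∈ closedBall (0 : E) r, |‖z + y‖ - ‖z‖ - l y| ≤ β)
    {p : F →L[ℝ] ℝ} (hp : ‖p‖ ≤ 1) (hpz : p (g z - g (-z)) = ‖g z - g (-z)‖) {y : E}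
    (hyr : y ∈ closedBall 0 r) (hy : y ∈ closedBall 0 1) :
    |p (g y) - (p (g (-z)) + ‖z‖ + l y)| ≤ β + 2 * δ := by
  have hzB : z ∈ closedBall (0 : E) 1 := mem_closedBall_zero_iff.2 hz
  have hzB' : -z ∈ closedBall (0 : E) 1 := by rwa [mem_closedBall_zero_iff, norm_neg]
  have hple {x x' : E} (hx : x ∈ closedBall 0 1) (hx' : x' ∈ closedBall 0 1) :
      p (g x) - p (g x') ≤ ‖x - x'‖ + δ := by
    rw [← map_sub, ← dist_eq_norm]
    refine (le_abs_self _).trans ((p.le_of_opNorm_le hp _).trans ?_)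
    rw [one_mul, ← dist_eq_norm]
    exact hg.dist_le hx hx'
  have hgrow : 2 * ‖z‖ - δ ≤ p (g z) - p (g (-z)) := by
    have hdist := hg.le_dist hzB hzB'
    rwa [dist_eq_norm, dist_eq_norm, sub_neg_eq_add, ← two_smul ℝ z, norm_smul,
      Real.norm_two, ← hpz, map_sub] at hdist
  have hfwd : p (g y) - p (g (-z)) ≤ ‖z + y‖ + δ := by
    simpa only [sub_neg_eq_add, add_comm z] using hple hy hzB'
  have hbwd : p (g z) - p (g y) ≤ ‖z + -y‖ + δ := by
    simpa only [sub_eq_add_neg] using hple hzB hy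
  have hly := le_of_abs_le (hl y hyr)
  have hly' := le_of_abs_le (hl (-y) (by rwa [mem_closedBall_zero_iff, norm_neg,
    ← mem_closedBall_zero_iff]))
  rw [map_neg] at hly'
  rw [abs_le]
  constructor <;> linarith [hg.nonneg ⟨z, hzB⟩]

theorem IsApproxIsometryOn.mul_norm_le_norm_mollifiedDeriv [FiniteDimensional ℝ E]
    [MeasurableSpace E] [BorelSpace E] {μ : Measure E} [μ.IsAddHaarMeasure] [CompleteSpace F]
    {φ : E → ℝ} {g : E → F} {δ β r : ℝ} (hg : IsApproxIsometryOn δ g (closedBall 0 1))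
    (hgc : Continuous g) (hφ : IsMollifier μ φ r) (hr : r ≤ 1) {z : E} (hz : ‖z‖ ≤ 1)
    (hdiff : DifferentiableAt ℝ (‖·‖) z)
    (hβ : ∀ y ∈ closedBall (0 : E) r, |‖z + y‖ - ‖z‖ - fderiv ℝ (‖·‖) z y| ≤ β) :
    (1 - (∫ x, ‖fderiv ℝ φ x‖ ∂μ) * (β + 2 * δ)) * ‖z‖ ≤ ‖mollifiedDeriv μ φ g z‖ := by
  obtain ⟨p, hp, hpz⟩ := exists_dual_vector'' ℝ (g z - g (-z))
  have happrox := neg_le_of_abs_le (hφ.abs_map_mollifiedDeriv_sub_le hgc p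
    (fun y hy => hg.abs_map_sub_affine_le hz hβ hp hpz hy (closedBall_subset_closedBall hr hy)) z)
  rw [hdiff.fderiv_norm_self] at happrox
  have hpT : p (mollifiedDeriv μ φ g z) ≤ ‖mollifiedDeriv μ φ g z‖ :=
    (le_abs_self _).trans (by simpa using p.le_of_opNorm_le hp (mollifiedDeriv μ φ g z))
  linarith

theorem mul_norm_le_of_forall_mem_sphere {T : E →L[ℝ] F} {c : ℝ}
    (hT : ∀ u, ‖u‖ = 1 → c ≤ ‖T u‖) (x : E) : c * ‖x‖ ≤ ‖T x‖ := by
  obtain rfl | hx := eq_or_ne x 0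
  · simp
  have hunit := hT (‖x‖⁻¹ • x) (norm_smul_inv_norm (𝕜 := ℝ) hx)
  rwa [map_smul, norm_smul, norm_inv, norm_norm, le_inv_mul_iff₀ (norm_pos_iff.2 hx),
    mul_comm] at hunit

theorem mul_norm_le_of_net {T : E →L[ℝ] F} {S : Set E} {c M η : ℝ} (hc : 0 ≤ c)
    (hTM : ‖T‖ ≤ M) (hS : ∀ u ∈ closedBall (0 : E) 1, ∃ z ∈ S, dist u z ≤ η)
    (hT : ∀ z ∈ S, c * ‖z‖ ≤ ‖T z‖) (x : E) : (c * (1 - η) - M * η) * ‖x‖ ≤ ‖T x‖ := by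
  refine mul_norm_le_of_forall_mem_sphere (fun u hu => ?_) x
  obtain ⟨z, hzS, huz⟩ := hS u (mem_closedBall_zero_iff.2 hu.le)
  rw [dist_eq_norm] at huz
  have hz : 1 - η ≤ ‖z‖ := by linarith [norm_sub_norm_le u z]
  have hTuz : ‖T z‖ - ‖T u‖ ≤ M * η := calc
    ‖T z‖ - ‖T u‖ ≤ ‖T (u - z)‖ := by
      rw [map_sub, norm_sub_rev]
      exact norm_sub_norm_le _ _
    _ ≤ M * η := (T.le_of_opNorm_le hTM _).trans
      (mul_le_mul_of_nonneg_left huz ((norm_nonneg T).trans hTM))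
  linarith [hT z hzS, mul_le_mul_of_nonneg_left hz hc]

end LowerBound

section ApproxIsometry

variable {E : Type*} [NormedAddCommGroup E] [NormedSpace ℝ E] [FiniteDimensional ℝ E]

theorem exists_clm_of_continuous_isApproxIsometryOn {η : ℝ} (hη : 0 < η) (hη1 : η ≤ 1) :
    ∃ δ > 0, ∀ (F : Type*) [NormedAddCommGroup F] [NormedSpace ℝ F] [CompleteSpace F] (g : E → F),
      Continuous g → IsApproxIsometryOn δ g (closedBall 0 1) →
        ∃ T : E →L[ℝ] F, ∀ x, (1 - 3 * η) * ‖x‖ ≤ ‖T x‖ ∧ ‖T x‖ ≤ (1 + η) * ‖x‖ := by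
  let _ : MeasurableSpace E := borel E
  have : BorelSpace E := ⟨rfl⟩
  let μ : Measure E := Measure.addHaar
  obtain ⟨ψ, hψ⟩ := exists_isMollifier_one μ
  obtain ⟨C, hC, hψC⟩ : ∃ C > 0, ∫ x, ‖fderiv ℝ ψ x‖ ∂μ ≤ C :=
    ⟨_, lt_max_of_lt_right one_pos, le_max_left _ 1⟩
  obtain ⟨S, hSball, hSfin, hSdiff, hSnet⟩ := exists_finite_net_differentiableAt_norm (E := E) hη
  obtain ⟨R, hR, hRS⟩ := exists_radius_forall_norm_sub_fderiv_le hSfin hSdiff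
    (κ := η / (2 * C)) (by positivity)
  let r := min R 1
  have hr : 0 < r := lt_min hR one_pos
  obtain ⟨φ, hφ, hφψ⟩ := hψ.exists_rescale hr
  have hφC : ∫ x, ‖fderiv ℝ φ x‖ ∂μ ≤ r⁻¹ * C := by
    rw [hφψ]
    gcongr
  refine ⟨η * r / (4 * C), by positivity, fun F _ _ _ g hgc hg => ⟨mollifiedDeriv μ φ g, ?_⟩⟩
  have hnorm : ‖mollifiedDeriv μ φ g‖ ≤ 1 + η := by
    refine (hφ.norm_mollifiedDeriv_le hgc (by positivity) fun x hx x' hx' =>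
      hg.dist_le (closedBall_subset_closedBall (min_le_right R 1) hx)
        (closedBall_subset_closedBall (min_le_right R 1) hx')).trans ?_
    calc 1 + (∫ x, ‖fderiv ℝ φ x‖ ∂μ) * (η * r / (4 * C))
        ≤ 1 + r⁻¹ * C * (η * r / (4 * C)) := by gcongr
      _ = 1 + η / 4 := by field_simp
      _ ≤ 1 + η := by linarith
  have hlow : ∀ z ∈ S, (1 - η) * ‖z‖ ≤ ‖mollifiedDeriv μ φ g z‖ := fun z hz => by
    refine le_trans ?_ (hg.mul_norm_le_norm_mollifiedDeriv hgc hφ (min_le_right R 1)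
      (mem_closedBall_zero_iff.1 (hSball hz)) (hSdiff z hz) (β := η / (2 * C) * r) fun y hy =>
        (hRS z hz y (closedBall_subset_closedBall (min_le_left R 1) hy)).trans ?_)
    · gcongr
      calc (∫ x, ‖fderiv ℝ φ x‖ ∂μ) * (η / (2 * C) * r + 2 * (η * r / (4 * C)))
          ≤ r⁻¹ * C * (η / (2 * C) * r + 2 * (η * r / (4 * C))) := by gcongr
        _ = η := by field_simp; ring
    · gcongr
      exact mem_closedBall_zero_iff.1 hy
  refine fun x => ⟨?_, ContinuousLinearMap.le_of_opNorm_le _ hnorm x⟩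
  convert mul_norm_le_of_net (sub_nonneg.2 hη1) hnorm
    (fun u hu => (hSnet u hu).imp fun z hz => ⟨hz.1, hz.2.le⟩) hlow x using 2
  ring

theorem exists_clm_of_isApproxIsometryOn {ε : ℝ} (hε : 0 < ε) :
    ∃ δ > 0, ∀ (F : Type*) [NormedAddCommGroup F] [NormedSpace ℝ F] [CompleteSpace F] (g : E → F),
      IsApproxIsometryOn δ g (closedBall 0 1) →
        ∃ T : E →L[ℝ] F, ∀ x, ‖x‖ ≤ ‖T x‖ ∧ ‖T x‖ ≤ (1 + ε) * ‖x‖ := by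
  obtain ⟨η, hη, hη3, hηε⟩ : ∃ η > 0, 3 * η < 1 ∧ 1 + η = (1 - 3 * η) * (1 + ε) := by
    refine ⟨ε / (4 + 3 * ε), by positivity, ?_, ?_⟩
    · rw [mul_div_assoc', div_lt_one (by positivity)]
      linarith
    · field_simp
      ring
  have hpos : 0 < 1 - 3 * η := by linarith
  obtain ⟨δ, hδ, h⟩ := exists_clm_of_continuous_isApproxIsometryOn (E := E) hη (by linarith)
  refine ⟨δ / 5, by positivity, fun F _ _ _ g hg => ?_⟩
  obtain ⟨g', hg'⟩ := hg.exists_continuousMap isClosed_closedBall (by positivity)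
  rw [mul_div_cancel₀ _ (by norm_num)] at hg'
  obtain ⟨T, hT⟩ := h F g' g'.continuous hg'
  refine ⟨(1 - 3 * η)⁻¹ • T, fun x => ?_⟩
  rw [smul_apply, norm_smul, Real.norm_of_nonneg (inv_nonneg.2 hpos.le), le_inv_mul_iff₀ hpos,
    inv_mul_le_iff₀ hpos, ← mul_assoc, ← hηε]
  exact hT x

end ApproxIsometry

theorem isometric_embedding_of_net_gives_isomorphic_subspace_general
    {Z : Type*} [NormedAddCommGroup Z] [NormedSpace ℝ Z] [FiniteDimensional ℝ Z]
    {ε : ℝ} (hε : 0 < ε) :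
    ∃ δ : ℝ, 0 < δ ∧
      ∀ (F : Type*) [NormedAddCommGroup F] [NormedSpace ℝ F] (N : Set Z),
        (∀ z ∈ Metric.closedBall (0 : Z) 1, ∃ y ∈ N, dist z y ≤ δ) →
        (∃ f : N → F, Isometry f) →
        ∃ T : Z →L[ℝ] F, Function.Injective T ∧
          ∀ z : Z, ‖z‖ ≤ ‖T z‖ ∧ ‖T z‖ ≤ (1 + ε) * ‖z‖ := by
  obtain ⟨δ, hδ, h⟩ := exists_clm_of_isApproxIsometryOn (E := Z) hε
  refine ⟨δ / 4, by positivity, fun F _ _ N hN ⟨f, hf⟩ => ?_⟩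
  obtain ⟨t, htN, ht, htnet⟩ := exists_finite_subset_dist_lt_of_isCompact (ρ := δ / 2)
    (isCompact_closedBall (0 : Z) 1)
    fun z hz => (hN z hz).imp fun y hy => ⟨hy.1, by linarith [hy.2]⟩
  have : Finite t := ht
  have : Nonempty t :=
    let ⟨y, hy, _⟩ := htnet 0 (mem_closedBall_self zero_le_one)
    ⟨⟨y, hy⟩⟩
  -- A finite subnet spans a finite-dimensional, hence complete, subspace of `F`.
  obtain ⟨W, _, f', hf'⟩ := exists_isometry_finiteDimensional_submodule
    (hf.comp (f := inclusion htN) fun _ _ => rfl)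
  have : CompleteSpace W := FiniteDimensional.complete ℝ W
  obtain ⟨g, hg⟩ := exists_isApproxIsometryOn_of_isometry_net hf'
    fun z hz => (htnet z hz).imp fun y hy => ⟨hy.1, hy.2.le⟩
  rw [mul_div_cancel₀ _ two_ne_zero] at hg
  obtain ⟨T, hT⟩ := h W g hg
  refine ⟨W.subtypeL ∘L T, (injective_iff_map_eq_zero _).2 fun z hz => ?_, hT⟩
  exact norm_le_zero_iff.1 ((hT z).1.trans_eq (norm_eq_zero.2 (Subtype.ext hz)))

theorem isometric_embedding_of_net_gives_isomorphic_subspace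
    {Z F : Type*} [NormedAddCommGroup Z] [NormedSpace ℝ Z] [FiniteDimensional ℝ Z]
    [NormedAddCommGroup F] [NormedSpace ℝ F] [CompleteSpace F]
    (ε : ℝ) (hε : 0 < ε) :
    ∃ δ : ℝ, 0 < δ ∧
      ∀ N : Set Z, N ⊆ Metric.closedBall (0 : Z) 1 →
        (∀ z ∈ Metric.closedBall (0 : Z) 1, ∃ y ∈ N, dist z y ≤ δ) →
        (∃ f : N → F, Isometry f) →
        ∃ T : Z →L[ℝ] F, Function.Injective T ∧
          ∀ z : Z, ‖z‖ ≤ ‖T z‖ ∧ ‖T z‖ ≤ (1 + ε) * ‖z‖ := by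
  obtain ⟨δ, hδ, h⟩ := isometric_embedding_of_net_gives_isomorphic_subspace_general (Z := Z) hε
  exact ⟨δ, hδ, fun N _ => h F N⟩
end
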